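/- arXiv:cs/0703029 — 4 statements merged into one kernel-verified Lean document; each statement's English description precedes it below -/
import Mathlib

section
/- Let A = (a_{ij}) ∈ ℝ^{N×N} be a nonzero skew-symmetric matrix, a := max |a_{ij}|, and t > 0. With log Φ̃(t,A) := E log det(√t I_N + Y_A) for Y_A built from i.i.d. standard Gaussians, one has (1/N) log Φ̃(t,A) ≤ (1/N) log Φ(t,A) ≤ (1/N) log Φ̃(t,A) + a²/(2t), where Φ(t,A) is the weighted matching polynomial (times √t if N is odd). -/
/-!
Write `p(ξ) = det(√t I + Y_A(ξ))`, a polynomial in the independent standard Gaussian coordinates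
`ξ`. The left inequality is Jensen's inequality for `log`, combined with `E p = Φ(t, A)` (times
`√t` for odd `N`). The right inequality is a reverse Jensen inequality: if `p ≥ c > 0` has
polynomial growth and `|∇p|² ≤ K p²`, that is `|∇ log p|² ≤ K`, then `E p · E (1/p) ≤ exp K`
(`integral_mul_integral_inv_le`), and `E (1/p) ≥ exp (-E log p)` gives `log E p ≤ E log p + K`
(`log_integral_gap`).

The reverse inequality is proved by interpolation. For independent standard Gaussian vectors
`U`, `V` put `h(θ) = E [p(cos θ U + sin θ V) / p(U)]`. Then `h(0) = 1` and
`h(π/2) = E p · E (1/p)`. The pair `W = cos θ U + sin θ V`, `X = -sin θ U + cos θ V` is again a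
pair of independent standard Gaussian vectors, and `U = cos θ W - sin θ X`, so that
`h'(θ) = E [∇p(W) · X / p(cos θ W - sin θ X)]`. Stein's identity in `X` turns this into
`sin θ · E [∇p(W) · ∇p(U) / p(U)²]`, which is at most `K sin θ · h(θ)` by the Cauchy-Schwarz
inequality (`deriv_interp_le`). Hence `h(θ) exp (K cos θ)` decreases on `[0, π/2]`.

For the determinant, `K = N a² / (2t)` works. With `M = √t I + Y_A` and `G = M⁻¹`, Jacobi's formula
gives `∂ log p / ∂ξ_{ij} = a_{ij} (G_{ji} - G_{ij})` (`pd_detY`). Since `M + Mᵀ = 2√t I`, one has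
`G + Gᵀ = 2√t G Gᵀ`, so `G_{ii} = √t ∑ⱼ G_{ij}²`, and discarding the off-diagonal part of
`‖G + Gᵀ‖²` bounds `‖G - Gᵀ‖² = 4‖G‖² - ‖G + Gᵀ‖²` by
`∑ᵢ (4 G_{ii}/√t - 4 G_{ii}²) ≤ N/t` (`sum_sq_inv_sub_le`). The lower bound `p ≥ √t ^ N` follows by
induction on the size from the Schur complement (`pow_le_det`).

Finally `E p` is computed from the Leibniz formula (`integral_detY`): the term of a permutation
has nonzero expectation only if the permutation is an involution, involutions correspond to
matchings, and the sign of an involution cancels the signs of the products `a_{ij} a_{ji}`.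
-/

open MeasureTheory ProbabilityTheory Matrix

/-- Total weighted `k`-matching of the weighted graph encoded by the
skew-symmetric matrix `A`. -/
noncomputable def phiW {N : ℕ} (A : Matrix (Fin N) (Fin N) ℝ) (k : ℕ) : ℝ :=
  ∑ M ∈ Finset.univ.filter
      (fun M : Finset (Fin N × Fin N) =>
        ((∀ p ∈ M, p.1 < p.2) ∧
          ∀ p ∈ M, ∀ q ∈ M, p ≠ q →
            p.1 ≠ q.1 ∧ p.1 ≠ q.2 ∧ p.2 ≠ q.1 ∧ p.2 ≠ q.2) ∧ M.card = k),
    ∏ p ∈ M, (A p.1 p.2) ^ 2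

/-- The weighted matching polynomial `Φ(t, A)`. -/
noncomputable def PhiW {N : ℕ} (A : Matrix (Fin N) (Fin N) ℝ) (t : ℝ) : ℝ :=
  ∑ k ∈ Finset.range (N / 2 + 1), phiW A k * t ^ (N / 2 - k)

/-- `Φ(t,A)`, multiplied by `√t` when `N` is odd. -/
noncomputable def PhiFull {N : ℕ} (A : Matrix (Fin N) (Fin N) ℝ) (t : ℝ) : ℝ :=
  (if Even N then 1 else Real.sqrt t) * PhiW A t

/-- Index type of the strictly upper-triangular positions. -/
abbrev PairIdx (N : ℕ) := {p : Fin N × Fin N // p.1 < p.2}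

/-- The canonical product of standard Gaussian measures, one for each edge slot. -/
noncomputable def gaussPi (N : ℕ) : Measure (PairIdx N → ℝ) :=
  Measure.pi fun _ => gaussianReal 0 1

/-- The sample `Y_A(ξ)` of the random skew-symmetric matrix `Y_A`. -/
noncomputable def sampleY {N : ℕ} (A : Matrix (Fin N) (Fin N) ℝ)
    (ξ : PairIdx N → ℝ) : Matrix (Fin N) (Fin N) ℝ :=
  Matrix.of fun i j =>
    if h : i < j then A i j * ξ ⟨(i, j), h⟩
    else if h : j < i then A i j * ξ ⟨(j, i), h⟩
    else 0

/-- `log Φ̃(t, A) = E log det(√t I_N + Y_A)` for i.i.d. standard Gaussian entries. -/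
noncomputable def logPhiTilde {N : ℕ} (t : ℝ) (A : Matrix (Fin N) (Fin N) ℝ) : ℝ :=
  ∫ ξ, Real.log ((Real.sqrt t • (1 : Matrix (Fin N) (Fin N) ℝ) + sampleY A ξ).det) ∂(gaussPi N)

/-- The constant `C₁ = -(1/√(2π)) ∫ log(x²) e^{-x²/2} dx`. -/
noncomputable def C1 : ℝ :=
  -(Real.sqrt (2 * Real.pi))⁻¹ * ∫ x : ℝ, Real.log (x ^ 2) * Real.exp (-x ^ 2 / 2)

/-! ### Standard Gaussian vectors and Stein's identity -/

section Gaussian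

/-- The standard Gaussian measure on `ι → ℝ`: the law of a family of independent standard Gaussian
variables. -/
noncomputable def stdG (ι : Type*) [Fintype ι] : Measure (ι → ℝ) :=
  Measure.pi fun _ => gaussianReal 0 1

variable {ι : Type*} [Fintype ι]

instance : IsProbabilityMeasure (stdG ι) := by unfold stdG; infer_instance

lemma stdG_eq_map : stdG ι = (stdGaussian (EuclideanSpace ℝ ι)).map
    (EuclideanSpace.equiv ι ℝ) := by
  rw [← map_pi_eq_stdGaussian, Measure.map_map (by fun_prop) (by fun_prop)]
  exact Measure.map_id.symm

instance stdG_isGaussian : IsGaussian (stdG ι) := by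
  rw [stdG_eq_map]
  infer_instance

lemma integral_id_stdG : (stdG ι)[id] = 0 := by
  rw [stdG_eq_map, integral_map (by fun_prop) (by fun_prop)]
  simp only [id]
  rw [ContinuousLinearEquiv.integral_comp_id_comm, integral_id_stdGaussian, map_zero]

/-- Gaussian integration by parts in one variable, `E [X h(X)] = E [h'(X)]`, for `h` and `h'`
bounded. -/
lemma stein_one {h h' : ℝ → ℝ} {C : ℝ} (hd : ∀ x, HasDerivAt h (h' x) x)
    (hm : Measurable h') (hb : ∀ x, |h x| ≤ C) (hb' : ∀ x, |h' x| ≤ C) :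
    ∫ x, x * h x ∂(gaussianReal 0 1) = ∫ x, h' x ∂(gaussianReal 0 1) := by
  have hc : Continuous h := continuous_iff_continuousAt.2 fun x => (hd x).continuousAt
  rw [integral_gaussianReal_eq_integral_smul one_ne_zero,
    integral_gaussianReal_eq_integral_smul one_ne_zero]
  simp only [smul_eq_mul]
  have hg : ∀ x, HasDerivAt (gaussianPDFReal 0 1) (-x * gaussianPDFReal 0 1 x) x := by
    intro x
    simp only [gaussianPDFReal_def]
    have h1 : HasDerivAt (fun x : ℝ => -(x - 0) ^ 2 / (2 * ((1 : NNReal) : ℝ))) (-x) x := by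
      have := ((((hasDerivAt_id x).sub_const (0:ℝ)).pow 2).neg).div_const (2 * ((1 : NNReal) : ℝ))
      refine this.congr_deriv ?_
      simp only [id, NNReal.coe_one]
      norm_num
      ring
    have := (h1.exp).const_mul (√(2 * Real.pi * ((1 : NNReal) : ℝ)))⁻¹
    refine this.congr_deriv ?_
    ring
  have hx : Integrable (fun x : ℝ => x * gaussianPDFReal 0 1 x) := by
    have h1 : Integrable (fun x : ℝ => x) (gaussianReal 0 1) :=
      (memLp_id_gaussianReal (μ := 0) (v := 1) 1).integrable le_rfl
    rw [gaussianReal_of_var_ne_zero _ one_ne_zero] at h1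
    rw [integrable_withDensity_iff (by fun_prop) (by simp [gaussianPDF])] at h1
    simpa using h1
  have h0 : Integrable (fun x : ℝ => gaussianPDFReal 0 1 x) := integrable_gaussianPDFReal 0 1
  have := integral_mul_deriv_eq_deriv_mul_of_integrable (u := h) (u' := h')
    (v := gaussianPDFReal 0 1) (v' := fun x => -x * gaussianPDFReal 0 1 x)
    (fun x _ => hd x) (fun x _ => hg x) ?_ ?_ ?_
  · rw [← neg_inj, ← integral_neg]
    calc _ = ∫ x, h x * (-x * gaussianPDFReal 0 1 x) := by congr 1; ext x; ring
      _ = _ := this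
      _ = _ := by congr 2; ext x; ring
  · have := (hx.neg).bdd_mul (c := C) hc.aestronglyMeasurable (by filter_upwards with x using hb x)
    refine this.congr ?_
    filter_upwards with x
    simp
  · exact h0.bdd_mul (c := C) hm.aestronglyMeasurable (by filter_upwards with x using hb' x)
  · exact h0.bdd_mul (c := C) hc.aestronglyMeasurable (by filter_upwards with x using hb x)

/-- Resampling one coordinate of a standard Gaussian vector leaves its law unchanged. -/
lemma map_update_stdG [DecidableEq ι] (i : ι) :
    ((stdG ι).prod (gaussianReal 0 1)).map (fun z => Function.update z.1 i z.2) = stdG ι := by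
  symm
  unfold stdG
  refine Measure.pi_eq ?_
  intro s hs
  rw [Measure.map_apply (by fun_prop) (MeasurableSet.univ_pi hs)]
  have : (fun z : (ι → ℝ) × ℝ => Function.update z.1 i z.2) ⁻¹' (Set.univ.pi s)
      = (Set.univ.pi (Function.update s i Set.univ)) ×ˢ s i := by
    ext z
    simp only [Set.mem_preimage, Set.mem_pi, Set.mem_univ, true_imp_iff, Set.mem_prod]
    constructor
    · intro h
      refine ⟨fun j => ?_, by simpa using h i⟩
      by_cases hj : j = i
      · subst hj; simp
      · simpa [hj] using h j
    · rintro ⟨h1, h2⟩ j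
      by_cases hj : j = i
      · subst hj; simpa using h2
      · simpa [hj] using h1 j
  rw [this, Measure.prod_prod, Measure.pi_pi,
    ← Finset.mul_prod_erase _ _ (Finset.mem_univ i), ← Finset.mul_prod_erase _ (fun j => gaussianReal 0 1 (s j)) (Finset.mem_univ i)]
  simp only [Function.update_self, measure_univ, one_mul]
  rw [mul_comm]
  congr 1
  refine Finset.prod_congr rfl fun j hj => ?_
  rw [Function.update_of_ne (Finset.ne_of_mem_erase hj)]

lemma integrable_norm_pow (k : ℕ) : Integrable (fun x : ι → ℝ => ‖x‖ ^ k) (stdG ι) := by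
  have := (IsGaussian.memLp_id (stdG ι) k (by simp)).integrable_norm_pow'
  simpa using this

/-- Stein's identity in the `i`-th coordinate, `E [Xᵢ h(X)] = E [∂ᵢ h(X)]`. It is obtained from the
one-variable identity by resampling that coordinate. -/
lemma stein_pi [DecidableEq ι] (i : ι) {h h' : (ι → ℝ) → ℝ} {C : ℝ}
    (hd : ∀ x, HasDerivAt (fun s => h (Function.update x i s)) (h' x) (x i))
    (hhm : Measurable h)
    (hm : Measurable h') (hb : ∀ x, |h x| ≤ C) (hb' : ∀ x, |h' x| ≤ C) :
    ∫ x, x i * h x ∂(stdG ι) = ∫ x, h' x ∂(stdG ι) := by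
  have h1 : Integrable (fun x : ι → ℝ => x i * h x) (stdG ι) := by
    have : Integrable (fun x : ι → ℝ => x i) (stdG ι) := by
      refine (integrable_norm_pow 1).mono' (measurable_pi_apply i).aestronglyMeasurable ?_
      filter_upwards with x
      simpa using norm_le_pi_norm x i
    exact this.mul_bdd (c := C) hhm.aestronglyMeasurable (by filter_upwards with x using hb x)
  have h2 : Integrable h' (stdG ι) :=
    Integrable.of_bound hm.aestronglyMeasurable C (by filter_upwards with x using hb' x)
  rw [← map_update_stdG i] at h1 h2 ⊢
  rw [integral_map (by fun_prop) h1.1, integral_map (by fun_prop) h2.1]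
  rw [integrable_map_measure h1.1 (by fun_prop)] at h1
  rw [integrable_map_measure h2.1 (by fun_prop)] at h2
  refine (integral_prod _ h1).trans (Eq.trans ?_ (integral_prod _ h2).symm)
  congr 1
  ext x
  simp only [Function.comp_apply, Function.update_self]
  refine stein_one (C := C) (fun s => ?_) (by fun_prop) (fun s => hb _) (fun s => hb' _)
  have := hd (Function.update x i s)
  simpa using this

/-- Continuous functions of polynomial growth are integrable for every Gaussian measure. -/
lemma integrable_of_growth {E : Type*} [NormedAddCommGroup E] [NormedSpace ℝ E] [MeasurableSpace E]
    [BorelSpace E] [CompleteSpace E] [SecondCountableTopology E] {μ : Measure E} [IsGaussian μ]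
    {F : E → ℝ} {C : ℝ} {k : ℕ} (hF : Continuous F) (hb : ∀ x, |F x| ≤ C * (1 + ‖x‖) ^ k) :
    Integrable F μ := by
  have h1 : MemLp (fun x : E => 1 + ‖x‖) k μ :=
    (memLp_const (1 : ℝ)).add (IsGaussian.memLp_id μ k (by simp)).norm
  have h2 := h1.integrable_norm_pow'
  refine (h2.const_mul C).mono' hF.aestronglyMeasurable ?_
  filter_upwards with x
  have : ‖(1 + ‖x‖)‖ = 1 + ‖x‖ := Real.norm_of_nonneg (by positivity)
  simpa [this] using hb x

/-! ### Gaussian interpolation -/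

section Interp

variable {p : (ι → ℝ) → ℝ} {c C K : ℝ} {k : ℕ}

/-- The `i`-th partial derivative of `p`. -/
noncomputable def pd [DecidableEq ι] (p : (ι → ℝ) → ℝ) (i : ι) (x : ι → ℝ) : ℝ := fderiv ℝ p x (Pi.single i 1)

lemma fderiv_eq_sum_pd [DecidableEq ι] (x v : ι → ℝ) : fderiv ℝ p x v = ∑ i, v i * pd p i x := by
  conv_lhs => rw [pi_eq_sum_univ' v]
  rw [map_sum]
  refine Finset.sum_congr rfl fun i _ => ?_
  rw [map_smul, smul_eq_mul, pd]

lemma continuous_pd [DecidableEq ι] (hp : ContDiff ℝ 1 p) (i : ι) : Continuous (pd p i) :=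
  (hp.continuous_fderiv one_ne_zero).clm_apply continuous_const

lemma abs_pd_le [DecidableEq ι] (hc : 0 < c) (hpc : ∀ x, c ≤ p x)
    (hg : ∀ x, ∑ i, pd p i x ^ 2 ≤ K * p x ^ 2) (i : ι) (x : ι → ℝ) :
    |pd p i x| ≤ √K * p x := by
  have h0 : 0 < p x := hc.trans_le (hpc x)
  have h1 : pd p i x ^ 2 ≤ K * p x ^ 2 :=
    (Finset.single_le_sum (f := fun i => pd p i x ^ 2) (fun j _ => sq_nonneg _)
      (Finset.mem_univ i)).trans (hg x)
  have h2 := Real.abs_le_sqrt h1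
  rwa [Real.sqrt_mul' _ (sq_nonneg _), Real.sqrt_sq h0.le] at h2

/-- The first component of the rotation by `θ` of a pair. -/
noncomputable def rotFst (θ : ℝ) (z : (ι → ℝ) × (ι → ℝ)) : ι → ℝ :=
  Real.cos θ • z.1 + Real.sin θ • z.2

/-- The second component of the rotation by `θ` of a pair. -/
noncomputable def rotSnd (θ : ℝ) (z : (ι → ℝ) × (ι → ℝ)) : ι → ℝ :=
  -Real.sin θ • z.1 + Real.cos θ • z.2

lemma norm_rotFst_le (θ : ℝ) (z : (ι → ℝ) × (ι → ℝ)) : ‖rotFst θ z‖ ≤ 2 * ‖z‖ := by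
  have h1 := norm_fst_le z
  have h2 := norm_snd_le z
  calc _ ≤ ‖Real.cos θ • z.1‖ + ‖Real.sin θ • z.2‖ := norm_add_le _ _
    _ ≤ 1 * ‖z‖ + 1 * ‖z‖ := by
      rw [norm_smul, norm_smul]
      gcongr
      · exact Real.abs_cos_le_one θ
      · exact Real.abs_sin_le_one θ
    _ = _ := by ring

lemma norm_rotSnd_le (θ : ℝ) (z : (ι → ℝ) × (ι → ℝ)) : ‖rotSnd θ z‖ ≤ 2 * ‖z‖ := by
  have h1 := norm_fst_le z
  have h2 := norm_snd_le z
  calc _ ≤ ‖-Real.sin θ • z.1‖ + ‖Real.cos θ • z.2‖ := norm_add_le _ _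
    _ ≤ 1 * ‖z‖ + 1 * ‖z‖ := by
      rw [norm_smul, norm_smul, norm_neg]
      gcongr
      · exact Real.abs_sin_le_one θ
      · exact Real.abs_cos_le_one θ
    _ = _ := by ring

lemma growth_of_norm_le (hc : 0 < c) (hpc : ∀ x, c ≤ p x)
    (hC : ∀ x, p x ≤ C * (1 + ‖x‖) ^ k) {w : ι → ℝ} {r : ℝ}
    (hw : ‖w‖ ≤ 2 * r) : p w ≤ C * 2 ^ k * (1 + r) ^ k := by
  have hC0 : 0 ≤ C := by
    have := hC 0
    have h2 := hpc 0
    simp at this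
    linarith
  calc p w ≤ C * (1 + ‖w‖) ^ k := hC w
    _ ≤ C * (2 * (1 + r)) ^ k := by gcongr; linarith
    _ = _ := by rw [mul_pow]; ring

/-- Polynomial growth of the directional derivatives of `p`, deduced from the growth of `p` and the
bound on its logarithmic gradient. -/
lemma abs_fderiv_le [DecidableEq ι] (hc : 0 < c) (hpc : ∀ x, c ≤ p x)
    (hC : ∀ x, p x ≤ C * (1 + ‖x‖) ^ k)
    (hg : ∀ x, ∑ i, pd p i x ^ 2 ≤ K * p x ^ 2) {w v : ι → ℝ} {r : ℝ}
    (hr : 0 ≤ r) (hw : ‖w‖ ≤ 2 * r) (hv : ‖v‖ ≤ 2 * r) :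
    |fderiv ℝ p w v| ≤ (Fintype.card ι * √K * C * 2 ^ (k + 1)) * (1 + r) ^ (k + 1) := by
  rw [fderiv_eq_sum_pd]
  have hB := growth_of_norm_le hc hpc hC hw
  calc |∑ i, v i * pd p i w| ≤ ∑ i, |v i * pd p i w| := Finset.abs_sum_le_sum_abs _ _
    _ ≤ ∑ _i : ι, (2 * (1 + r)) * (√K * (C * 2 ^ k * (1 + r) ^ k)) := by
      refine Finset.sum_le_sum fun i _ => ?_
      rw [abs_mul]
      have h1 : |v i| ≤ 2 * (1 + r) := (norm_le_pi_norm v i).trans (by linarith)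
      have h2 := abs_pd_le hc hpc hg i w
      exact mul_le_mul h1 (h2.trans (mul_le_mul_of_nonneg_left hB (Real.sqrt_nonneg K)))
        (abs_nonneg _) (by linarith)
    _ = _ := by simp only [Finset.sum_const, Finset.card_univ, nsmul_eq_mul]; ring

/-- A pair of independent standard Gaussian vectors is invariant under rotations. -/
lemma integral_rotate {F : (ι → ℝ) × (ι → ℝ) → ℝ} (hF : Continuous F) (θ : ℝ) :
    ∫ z, F (rotFst θ z, rotSnd θ z) ∂((stdG ι).prod (stdG ι)) = ∫ z, F z ∂((stdG ι).prod (stdG ι)) := by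
  conv_rhs => rw [← IsGaussian.map_rotation_eq_self (integral_id_stdG (ι := ι)) θ]
  rw [integral_map (by fun_prop) hF.aestronglyMeasurable]
  rfl

lemma unrotate {κ : Type*} (θ : ℝ) (z : (κ → ℝ) × (κ → ℝ)) :
    Real.cos θ • rotFst θ z - Real.sin θ • rotSnd θ z = z.1 := by
  ext i
  simp only [rotFst, rotSnd, Pi.sub_apply, Pi.smul_apply, Pi.add_apply, smul_eq_mul]
  linear_combination z.1 i * Real.sin_sq_add_cos_sq θ

@[fun_prop]
lemma continuous_rotFst {κ : Type*} (θ : ℝ) : Continuous (rotFst (ι := κ) θ) := by unfold rotFst; fun_prop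

@[fun_prop]
lemma continuous_rotSnd {κ : Type*} (θ : ℝ) : Continuous (rotSnd (ι := κ) θ) := by unfold rotSnd; fun_prop

/-- The interpolation `E [p(cos θ U + sin θ V) / p(U)]`, for independent standard Gaussian vectors
`U` and `V`. It runs from `1` at `θ = 0` to `E p · E (1/p)` at `θ = π/2`. -/
noncomputable def interp (p : (ι → ℝ) → ℝ) (θ : ℝ) : ℝ :=
  ∫ z, p (rotFst θ z) / p z.1 ∂((stdG ι).prod (stdG ι))

lemma hasDerivAt_interp [DecidableEq ι] (hp : ContDiff ℝ 1 p) (hc : 0 < c) (hpc : ∀ x, c ≤ p x)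
    (hC : ∀ x, p x ≤ C * (1 + ‖x‖) ^ k)
    (hg : ∀ x, ∑ i, pd p i x ^ 2 ≤ K * p x ^ 2) (θ : ℝ) :
    HasDerivAt (interp p)
      (∫ z, fderiv ℝ p (rotFst θ z) (rotSnd θ z) / p z.1 ∂((stdG ι).prod (stdG ι))) θ := by
  have hpos : ∀ x, 0 < p x := fun x => hc.trans_le (hpc x)
  have hpcont := hp.continuous
  have hfc : Continuous (fderiv ℝ p) := hp.continuous_fderiv one_ne_zero
  have hF : ∀ θ, Continuous (fun z : (ι → ℝ) × (ι → ℝ) => p (rotFst θ z) / p z.1) := by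
    intro θ
    exact (hpcont.comp (continuous_rotFst θ)).div (hpcont.comp continuous_fst) (fun z => (hpos _).ne')
  have hF' : Continuous (fun z : (ι → ℝ) × (ι → ℝ) => fderiv ℝ p (rotFst θ z) (rotSnd θ z) / p z.1) :=
    ((hfc.comp (continuous_rotFst θ)).clm_apply (continuous_rotSnd θ)).div
      (hpcont.comp continuous_fst) (fun z => (hpos _).ne')
  let D : ℝ := (Fintype.card ι * √K * C * 2 ^ (k + 1)) / c
  have hbd : ∀ θ (z : (ι → ℝ) × (ι → ℝ)),
      |fderiv ℝ p (rotFst θ z) (rotSnd θ z) / p z.1| ≤ D * (1 + ‖z‖) ^ (k + 1) := by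
    intro θ z
    have := abs_fderiv_le hc hpc hC hg (norm_nonneg z) (norm_rotFst_le θ z) (norm_rotSnd_le θ z)
    rw [abs_div, abs_of_pos (hpos z.1)]
    calc _ ≤ |fderiv ℝ p (rotFst θ z) (rotSnd θ z)| / c := by
          gcongr
          exact hpc _
      _ ≤ _ := by
          rw [div_mul_eq_mul_div]
          gcongr
  refine (hasDerivAt_integral_of_dominated_loc_of_deriv_le (μ := (stdG ι).prod (stdG ι))
    (F := fun θ z => p (rotFst θ z) / p z.1)
    (F' := fun θ z => fderiv ℝ p (rotFst θ z) (rotSnd θ z) / p z.1)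
    (bound := fun z => D * (1 + ‖z‖) ^ (k + 1)) (s := Set.univ) Filter.univ_mem
    (Filter.Eventually.of_forall fun θ => (hF θ).aestronglyMeasurable) ?_
    hF'.aestronglyMeasurable ?_ ?_ ?_).2
  · refine integrable_of_growth (C := C * 2 ^ k / c) (k := k) (hF θ) fun z => ?_
    rw [abs_of_pos (div_pos (hpos _) (hpos _)), div_mul_eq_mul_div]
    have h1 := growth_of_norm_le hc hpc hC (norm_rotFst_le θ z)
    exact div_le_div₀ ((hpos _).le.trans h1) h1 hc (hpc _)
  · filter_upwards with z θ _ using hbd θ z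
  · refine integrable_of_growth (C := D) (k := k + 1) (by fun_prop) fun z => ?_
    rw [abs_of_nonneg ((abs_nonneg _).trans (hbd θ z))]
  · filter_upwards with z θ _
    have h1 : HasDerivAt (fun θ => rotFst θ z) (rotSnd θ z) θ :=
      ((Real.hasDerivAt_cos θ).smul_const z.1).add ((Real.hasDerivAt_sin θ).smul_const z.2)
    exact (((hp.differentiable one_ne_zero) _).hasFDerivAt.comp_hasDerivAt θ h1).div_const _

/-- Stein's identity for the function `x ↦ 1 / p(cos θ w - sin θ x)`. -/
lemma stein_inv [DecidableEq ι] (hp : ContDiff ℝ 1 p) (hc : 0 < c) (hpc : ∀ x, c ≤ p x)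
    (hg : ∀ x, ∑ i, pd p i x ^ 2 ≤ K * p x ^ 2) (θ : ℝ) (w : ι → ℝ) (i : ι) :
    ∫ x, x i * (p (Real.cos θ • w - Real.sin θ • x))⁻¹ ∂(stdG ι) =
      ∫ x, Real.sin θ * pd p i (Real.cos θ • w - Real.sin θ • x) /
        p (Real.cos θ • w - Real.sin θ • x) ^ 2 ∂(stdG ι) := by
  have hpos : ∀ x, 0 < p x := fun x => hc.trans_le (hpc x)
  have hpm : Measurable p := hp.continuous.measurable
  have hdm : Measurable (pd p i) := (continuous_pd hp i).measurable
  have hu : Measurable fun x : ι → ℝ => Real.cos θ • w - Real.sin θ • x :=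
    (by fun_prop : Continuous _).measurable
  refine stein_pi (C := max c⁻¹ (√K * c⁻¹)) i (fun x => ?_) (hpm.comp hu).inv
    (((hdm.comp hu).const_mul _).div ((hpm.comp hu).pow_const 2)) (fun x => ?_) (fun x => ?_)
  · have h1 : HasDerivAt (fun s => Real.cos θ • w - Real.sin θ • Function.update x i s)
        (-(Real.sin θ • Pi.single i (1 : ℝ))) (x i) :=
      ((hasDerivAt_update x i (x i)).const_smul (Real.sin θ)).const_sub _
    have h2 := ((((hp.differentiable one_ne_zero) _).hasFDerivAt.comp_hasDerivAt (x i) h1).inv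
      (hpos _).ne')
    refine h2.congr_deriv ?_
    simp [pd, Function.update_eq_self]
  · rw [abs_of_pos (inv_pos.2 (hpos _))]
    exact le_max_of_le_left (inv_anti₀ hc (hpc _))
  · refine le_max_of_le_right ?_
    set u := Real.cos θ • w - Real.sin θ • x
    have h1 := abs_pd_le hc hpc hg i u
    rw [abs_div, abs_mul, abs_of_pos (pow_pos (hpos u) 2)]
    calc |Real.sin θ| * |pd p i u| / p u ^ 2 ≤ 1 * (√K * p u) / p u ^ 2 := by
          have := hpos u
          gcongr
          exact Real.abs_sin_le_one θ
      _ = √K * (p u)⁻¹ := by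
          have := (hpos u).ne'
          field_simp
      _ ≤ _ := by
          gcongr
          exact hpc u

/-- The derivative of the interpolation is at most `K sin θ` times the interpolation itself. -/
lemma deriv_interp_le [DecidableEq ι] (hp : ContDiff ℝ 1 p) (hc : 0 < c) (hpc : ∀ x, c ≤ p x)
    (hC : ∀ x, p x ≤ C * (1 + ‖x‖) ^ k) (hK : 0 ≤ K)
    (hg : ∀ x, ∑ i, pd p i x ^ 2 ≤ K * p x ^ 2) {θ : ℝ} (hθ : 0 ≤ Real.sin θ) :
    ∫ z, fderiv ℝ p (rotFst θ z) (rotSnd θ z) / p z.1 ∂((stdG ι).prod (stdG ι)) ≤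
      K * Real.sin θ * interp p θ := by
  have hpos : ∀ x, 0 < p x := fun x => hc.trans_le (hpc x)
  have hpcont := hp.continuous
  have hfc : Continuous (fderiv ℝ p) := hp.continuous_fderiv one_ne_zero
  let u : (ι → ℝ) → (ι → ℝ) → (ι → ℝ) := fun w x => Real.cos θ • w - Real.sin θ • x
  have hu : Continuous (fun z : (ι → ℝ) × (ι → ℝ) => u z.1 z.2) := by
    simp only [u]; fun_prop
  have hu1 : ∀ w, Continuous (u w) := fun w => by simp only [u]; fun_prop
  let F1 : (ι → ℝ) × (ι → ℝ) → ℝ := fun z => fderiv ℝ p z.1 z.2 / p (u z.1 z.2)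
  let F2 : (ι → ℝ) × (ι → ℝ) → ℝ := fun z => p z.1 / p (u z.1 z.2)
  have hF1 : Continuous F1 := ((hfc.comp continuous_fst).clm_apply continuous_snd).div
    (hpcont.comp hu) fun z => (hpos _).ne'
  have hF2 : Continuous F2 := (hpcont.comp continuous_fst).div
    (hpcont.comp hu) fun z => (hpos _).ne'
  have e1 : ∫ z, fderiv ℝ p (rotFst θ z) (rotSnd θ z) / p z.1 ∂((stdG ι).prod (stdG ι)) =
      ∫ z, F1 z ∂((stdG ι).prod (stdG ι)) := by
    rw [← integral_rotate hF1 θ]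
    simp only [F1, u, unrotate]
  have e2 : interp p θ = ∫ z, F2 z ∂((stdG ι).prod (stdG ι)) := by
    rw [← integral_rotate hF2 θ]
    simp only [F2, u, unrotate, interp]
  have n1 : ∀ z : (ι → ℝ) × (ι → ℝ), ‖z.1‖ ≤ 2 * ‖z‖ := fun z => by
    have := norm_fst_le z
    have := norm_nonneg z
    linarith
  have n2 : ∀ z : (ι → ℝ) × (ι → ℝ), ‖z.2‖ ≤ 2 * ‖z‖ := fun z => by
    have := norm_snd_le z
    have := norm_nonneg z
    linarith
  have i1 : Integrable F1 ((stdG ι).prod (stdG ι)) := by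
    refine integrable_of_growth (C := (Fintype.card ι * √K * C * 2 ^ (k + 1)) / c) (k := k + 1)
      hF1 fun z => ?_
    have h1 := abs_fderiv_le hc hpc hC hg (norm_nonneg z) (n1 z) (n2 z)
    simp only [F1]
    rw [abs_div, abs_of_pos (hpos _), div_mul_eq_mul_div]
    exact div_le_div₀ ((abs_nonneg _).trans h1) h1 hc (hpc _)
  have i2 : Integrable F2 ((stdG ι).prod (stdG ι)) := by
    refine integrable_of_growth (C := C * 2 ^ k / c) (k := k) hF2 fun z => ?_
    have h1 := growth_of_norm_le hc hpc hC (n1 z)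
    simp only [F2]
    rw [abs_of_pos (div_pos (hpos _) (hpos _)), div_mul_eq_mul_div]
    exact div_le_div₀ ((hpos _).le.trans h1) h1 hc (hpc _)
  -- In the rotated coordinates the first vector `w` is frozen, and Stein's identity is applied
  -- to the second one.
  rw [e1, e2, integral_prod _ i1, integral_prod _ i2, ← integral_const_mul]
  refine integral_mono i1.integral_prod_left (i2.integral_prod_left.const_mul _) fun w => ?_
  simp only [F1, F2]
  have hxi : ∀ i : ι, Integrable (fun x : ι → ℝ => x i * (p (u w x))⁻¹) (stdG ι) := by
    intro i
    refine integrable_of_growth (C := c⁻¹) (k := 1)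
      ((continuous_apply i).mul ((hpcont.comp (hu1 w)).inv₀ fun z => (hpos _).ne')) fun x => ?_
    rw [abs_mul, abs_of_pos (inv_pos.2 (hpos _)), mul_comm, pow_one]
    have h1 : |x i| ≤ 1 + ‖x‖ := (norm_le_pi_norm x i).trans (by linarith)
    exact mul_le_mul (inv_anti₀ hc (hpc _)) h1 (abs_nonneg _) (inv_nonneg.2 hc.le)
  have hdi : ∀ i : ι, Integrable (fun x : ι → ℝ =>
      Real.sin θ * pd p i (u w x) / p (u w x) ^ 2) (stdG ι) := by
    intro i
    refine integrable_of_growth (C := Real.sin θ * (√K / c)) (k := 0)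
      ((continuous_const.mul ((continuous_pd hp i).comp (hu1 w))).div
        ((hpcont.comp (hu1 w)).pow 2) fun z => (pow_pos (hpos _) 2).ne') fun x => ?_
    have h1 := abs_pd_le hc hpc hg i (u w x)
    have h2 := hpos (u w x)
    rw [abs_div, abs_mul, abs_of_pos (pow_pos (hpos _) 2), abs_of_nonneg hθ, pow_zero, mul_one,
      mul_div_assoc]
    refine mul_le_mul_of_nonneg_left ?_ hθ
    calc |pd p i (u w x)| / p (u w x) ^ 2 ≤ √K * p (u w x) / p (u w x) ^ 2 := by gcongr
      _ = √K / p (u w x) := by field_simp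
      _ ≤ √K / c := by gcongr; exact hpc _
  calc ∫ x, fderiv ℝ p w x / p (u w x) ∂(stdG ι)
      = ∫ x, ∑ i, pd p i w * (x i * (p (u w x))⁻¹) ∂(stdG ι) := by
        congr 1
        ext x
        rw [fderiv_eq_sum_pd, Finset.sum_div]
        refine Finset.sum_congr rfl fun i _ => ?_
        ring
    _ = ∑ i, pd p i w * ∫ x, x i * (p (u w x))⁻¹ ∂(stdG ι) := by
        rw [integral_finsetSum _ fun i _ => (hxi i).const_mul _]
        simp only [integral_const_mul]
    _ = ∑ i, pd p i w * ∫ x, Real.sin θ * pd p i (u w x) / p (u w x) ^ 2 ∂(stdG ι) := by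
        refine Finset.sum_congr rfl fun i _ => ?_
        rw [stein_inv hp hc hpc hg θ w i]
    _ = ∫ x, ∑ i, pd p i w * (Real.sin θ * pd p i (u w x) / p (u w x) ^ 2) ∂(stdG ι) := by
        rw [integral_finsetSum _ fun i _ => (hdi i).const_mul _]
        simp only [integral_const_mul]
    _ ≤ ∫ x, K * Real.sin θ * (p w / p (u w x)) ∂(stdG ι) := by
        refine integral_mono (integrable_finsetSum _ fun i _ => (hdi i).const_mul _) ?_ fun x => ?_
        · refine integrable_of_growth (C := K * Real.sin θ * (p w / c)) (k := 0)
            (continuous_const.mul (continuous_const.div (hpcont.comp (hu1 w))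
              fun z => (hpos _).ne')) fun x => ?_
          have h1 := hpos (u w x)
          have h2 := hpos w
          rw [abs_of_nonneg (by positivity), pow_zero, mul_one]
          gcongr
          exact hpc _
        · have h1 := hpos (u w x)
          have h2 := hpos w
          have hcs : ∑ i, pd p i w * pd p i (u w x) ≤ K * (p w * p (u w x)) := by
            have h3 := Finset.sum_mul_sq_le_sq_mul_sq Finset.univ (fun i => pd p i w)
              (fun i => pd p i (u w x))
            have h4 : (∑ i, pd p i w ^ 2) * ∑ i, pd p i (u w x) ^ 2 ≤
                (K * p w ^ 2) * (K * p (u w x) ^ 2) :=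
              mul_le_mul (hg _) (hg _) (Finset.sum_nonneg fun i _ => sq_nonneg _) (by positivity)
            refine abs_le_of_sq_le_sq' ?_ (by positivity) |>.2
            nlinarith
          calc ∑ i, pd p i w * (Real.sin θ * pd p i (u w x) / p (u w x) ^ 2)
              = (Real.sin θ / p (u w x) ^ 2) * ∑ i, pd p i w * pd p i (u w x) := by
                rw [Finset.mul_sum]
                refine Finset.sum_congr rfl fun i _ => ?_
                ring
            _ ≤ (Real.sin θ / p (u w x) ^ 2) * (K * (p w * p (u w x))) := by gcongr
            _ = _ := by field_simp
    _ = _ := integral_const_mul _ _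

/-- Reverse Jensen inequality: `E p · E (1/p) ≤ exp K` when `|∇p|² ≤ K p²`. -/
lemma integral_mul_integral_inv_le [DecidableEq ι] (hp : ContDiff ℝ 1 p) (hc : 0 < c)
    (hpc : ∀ x, c ≤ p x) (hC : ∀ x, p x ≤ C * (1 + ‖x‖) ^ k) (hK : 0 ≤ K)
    (hg : ∀ x, ∑ i, pd p i x ^ 2 ≤ K * p x ^ 2) :
    (∫ x, p x ∂(stdG ι)) * ∫ x, (p x)⁻¹ ∂(stdG ι) ≤ Real.exp K := by
  have hpos : ∀ x, 0 < p x := fun x => hc.trans_le (hpc x)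
  -- `H` decreases on `[0, π/2]`, by the differential inequality `deriv_interp_le`.
  let H : ℝ → ℝ := fun θ => interp p θ * Real.exp (K * Real.cos θ)
  have hH : ∀ θ, HasDerivAt H ((∫ z, fderiv ℝ p (rotFst θ z) (rotSnd θ z) / p z.1
      ∂((stdG ι).prod (stdG ι))) * Real.exp (K * Real.cos θ) +
      interp p θ * (Real.exp (K * Real.cos θ) * (K * -Real.sin θ))) θ := fun θ =>
    (hasDerivAt_interp hp hc hpc hC hg θ).mul (((Real.hasDerivAt_cos θ).const_mul K).exp)
  have hanti : AntitoneOn H (Set.Icc 0 (Real.pi / 2)) := by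
    refine antitoneOn_of_deriv_nonpos (convex_Icc _ _)
      (fun θ _ => (hH θ).continuousAt.continuousWithinAt)
      (fun θ _ => (hH θ).differentiableAt.differentiableWithinAt) fun θ hθ => ?_
    rw [interior_Icc] at hθ
    rw [(hH θ).deriv]
    have hs : 0 ≤ Real.sin θ :=
      Real.sin_nonneg_of_nonneg_of_le_pi hθ.1.le (by linarith [hθ.2, Real.pi_pos])
    have h1 := mul_le_mul_of_nonneg_right (deriv_interp_le hp hc hpc hC hK hg hs)
      (Real.exp_pos (K * Real.cos θ)).le
    linarith
  have h0 : H 0 = Real.exp K := by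
    simp [H, interp, rotFst, div_self (hpos _).ne']
  have h1 : H (Real.pi / 2) = (∫ x, p x ∂(stdG ι)) * ∫ x, (p x)⁻¹ ∂(stdG ι) := by
    simp only [H, interp, rotFst, Real.cos_pi_div_two, Real.sin_pi_div_two, zero_smul, one_smul,
      zero_add, mul_zero, Real.exp_zero, mul_one]
    simp only [div_eq_inv_mul]
    rw [integral_prod_mul (fun x => (p x)⁻¹) p, mul_comm]
  rw [← h0, ← h1]
  exact hanti ⟨le_rfl, by positivity⟩ ⟨by positivity, le_rfl⟩ (by positivity)

end Interp

/-- Jensen's inequality for `log` and its reverse, for a function `p` with `|∇ log p|² ≤ K`. -/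
lemma log_integral_gap [DecidableEq ι] {p : (ι → ℝ) → ℝ} {c C K : ℝ} {k : ℕ}
    (hp : ContDiff ℝ 1 p) (hc : 0 < c)
    (hpc : ∀ x, c ≤ p x) (hC : ∀ x, p x ≤ C * (1 + ‖x‖) ^ k) (hK : 0 ≤ K)
    (hg : ∀ x, ∑ i, pd p i x ^ 2 ≤ K * p x ^ 2) :
    ∫ x, Real.log (p x) ∂(stdG ι) ≤ Real.log (∫ x, p x ∂(stdG ι)) ∧
    Real.log (∫ x, p x ∂(stdG ι)) ≤ ∫ x, Real.log (p x) ∂(stdG ι) + K := by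
  have hpos : ∀ x, 0 < p x := fun x => hc.trans_le (hpc x)
  have hpcont := hp.continuous
  have ip : Integrable p (stdG ι) :=
    integrable_of_growth hpcont fun x => by rw [abs_of_pos (hpos x)]; exact hC x
  have ii : Integrable (fun x => (p x)⁻¹) (stdG ι) :=
    integrable_of_growth (C := c⁻¹) (k := 0) (hpcont.inv₀ fun x => (hpos x).ne') fun x => by
      rw [abs_of_pos (inv_pos.2 (hpos x)), pow_zero, mul_one]
      exact inv_anti₀ hc (hpc x)
  have il : Integrable (fun x => Real.log (p x)) (stdG ι) := by
    refine (ip.add ii).mono' (hpcont.log fun x => (hpos x).ne').aestronglyMeasurable ?_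
    filter_upwards with x
    have h1 := Real.log_le_sub_one_of_pos (hpos x)
    have h2 := Real.one_sub_inv_le_log_of_pos (hpos x)
    have h3 := hpos x
    have h4 := inv_pos.2 h3
    simp only [Pi.add_apply]
    exact abs_le.2 ⟨by linarith, by linarith⟩
  have mpos : c ≤ ∫ x, p x ∂(stdG ι) := by
    have := integral_mono (integrable_const c) ip hpc
    simpa using this
  have m0 : 0 < ∫ x, p x ∂(stdG ι) := hc.trans_le mpos
  constructor
  · set m := ∫ x, p x ∂(stdG ι) with hm
    -- Integrate `log p ≤ log m + (p / m - 1)`.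
    have hsub : Integrable (fun x => p x * m⁻¹ - 1) (stdG ι) :=
      (ip.mul_const _).sub (integrable_const _)
    have : ∫ x, Real.log (p x) ∂(stdG ι) ≤ ∫ x, (Real.log m + (p x * m⁻¹ - 1)) ∂(stdG ι) := by
      refine integral_mono il ((integrable_const _).add hsub) fun x => ?_
      have h1 := Real.log_le_sub_one_of_pos (div_pos (hpos x) m0)
      rw [Real.log_div (hpos x).ne' m0.ne', div_eq_mul_inv] at h1
      linarith
    refine this.trans_eq ?_
    rw [integral_add (integrable_const _) hsub,
      integral_sub (ip.mul_const _) (integrable_const _), integral_mul_const, ← hm]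
    simp [mul_inv_cancel₀ m0.ne']
  · set l := ∫ x, Real.log (p x) ∂(stdG ι) with hl
    have hsub : Integrable (fun x => l - Real.log (p x)) (stdG ι) := (integrable_const _).sub il
    -- Integrate `1 / p ≥ exp (-l) (1 + l - log p)`.
    have hi : Real.exp (-l) ≤ ∫ x, (p x)⁻¹ ∂(stdG ι) := by
      have : ∫ x, Real.exp (-l) * (1 + (l - Real.log (p x))) ∂(stdG ι) ≤
          ∫ x, (p x)⁻¹ ∂(stdG ι) := by
        refine integral_mono (((integrable_const _).add
          hsub).const_mul _) ii fun x => ?_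
        have h1 := Real.add_one_le_exp (l - Real.log (p x))
        have h2 : (p x)⁻¹ = Real.exp (-l) * Real.exp (l - Real.log (p x)) := by
          rw [← Real.exp_add, ← add_sub_assoc, neg_add_cancel, zero_sub, Real.exp_neg, Real.exp_log (hpos x)]
        simp only
        rw [h2]
        gcongr
        linarith
      refine le_trans (le_of_eq ?_) this
      rw [integral_const_mul, integral_add (integrable_const _) hsub,
        integral_sub (integrable_const _) il, ← hl]
      simp
    have h1 := integral_mul_integral_inv_le hp hc hpc hC hK hg
    have h2 : (∫ x, p x ∂(stdG ι)) * Real.exp (-l) ≤ Real.exp K :=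
      (mul_le_mul_of_nonneg_left hi m0.le).trans h1
    have h3 := Real.log_le_log (by positivity) h2
    rw [Real.log_mul m0.ne' (Real.exp_pos _).ne', Real.log_exp, Real.log_exp] at h3
    linarith

end Gaussian

/-! ### Matrices with scalar symmetric part -/

lemma dot_mulVec_of_add_transpose {n : Type*} [Fintype n] [DecidableEq n] {M : Matrix n n ℝ} {s : ℝ}
    (hM : M + Mᵀ = (2 * s) • 1) (w : n → ℝ) : w ⬝ᵥ (M *ᵥ w) = s * (w ⬝ᵥ w) := by
  have h1 : w ⬝ᵥ (Mᵀ *ᵥ w) = w ⬝ᵥ (M *ᵥ w) := by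
    rw [Matrix.mulVec_transpose, dotProduct_comm, ← Matrix.dotProduct_mulVec]
  have h2 : w ⬝ᵥ ((M + Mᵀ) *ᵥ w) = 2 * s * (w ⬝ᵥ w) := by
    rw [hM, Matrix.smul_mulVec, Matrix.one_mulVec, dotProduct_smul, smul_eq_mul]
  rw [Matrix.add_mulVec, dotProduct_add, h1] at h2
  linarith

/-- A matrix with symmetric part `s I`, `s > 0`, has determinant at least `s ^ n`. Splitting off the
last row and column, the Schur complement is `s + s |w|²` for some vector `w`. -/
lemma pow_le_det {s : ℝ} (hs : 0 < s) : ∀ (n : ℕ) (M : Matrix (Fin n) (Fin n) ℝ),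
    M + Mᵀ = (2 * s) • 1 → s ^ n ≤ M.det := by
  intro n
  induction n with
  | zero => intro M _; simp
  | succ n ih =>
    intro M hM
    let e : Fin n ⊕ Fin 1 ≃ Fin (n + 1) := finSumFinEquiv
    let M' := M.submatrix e e
    have hM' : ∀ i j, M' i j + M' j i = (2 * s) * (1 : Matrix (Fin n ⊕ Fin 1) (Fin n ⊕ Fin 1) ℝ) i j := by
      intro i j
      have := congrFun (congrFun hM (e i)) (e j)
      simpa [M', Matrix.one_apply] using this
    have hA : M'.toBlocks₁₁ + M'.toBlocks₁₁ᵀ = (2 * s) • 1 := by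
      ext i j
      have := hM' (Sum.inl i) (Sum.inl j)
      simpa [Matrix.one_apply, Matrix.toBlocks₁₁] using this
    have hdet := ih _ hA
    set P := M'.toBlocks₁₁ with hP
    have hdpos : 0 < P.det := (pow_pos hs n).trans_le hdet
    have hunit : IsUnit P.det := hdpos.ne'.isUnit
    let : Invertible P := Matrix.invertibleOfIsUnitDet P hunit
    let b : Fin n → ℝ := fun i => M' (Sum.inl i) (Sum.inr 0)
    let w : Fin n → ℝ := P⁻¹ *ᵥ b
    have hb : P *ᵥ w = b := by
      simp only [w, Matrix.mulVec_mulVec, Matrix.mul_nonsing_inv _ hunit, Matrix.one_mulVec]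
    have hC : ∀ i, M' (Sum.inr 0) (Sum.inl i) = - b i := by
      intro i
      have := hM' (Sum.inr 0) (Sum.inl i)
      simp at this
      simp only [b]
      linarith
    have hD : M' (Sum.inr 0) (Sum.inr 0) = s := by
      have := hM' (Sum.inr 0) (Sum.inr 0)
      simp at this
      linarith
    have h1 : M.det = P.det * (s + s * (w ⬝ᵥ w)) := by
      have h2 : M.det = M'.det := (Matrix.det_submatrix_equiv_self e M).symm
      rw [h2, ← Matrix.fromBlocks_toBlocks M']
      refine (Matrix.det_fromBlocks₁₁ P M'.toBlocks₁₂ M'.toBlocks₂₁ M'.toBlocks₂₂).trans ?_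
      congr 1
      rw [Matrix.det_fin_one, Matrix.invOf_eq_nonsing_inv, Matrix.mul_assoc, Matrix.sub_apply,
        ← dot_mulVec_of_add_transpose hA, hb]
      have h3 : (M'.toBlocks₂₁ * (P⁻¹ * M'.toBlocks₁₂)) 0 0 = - (w ⬝ᵥ b) := by
        rw [Matrix.mul_apply, dotProduct, ← Finset.sum_neg_distrib]
        refine Finset.sum_congr rfl fun i _ => ?_
        have h4 : (P⁻¹ * M'.toBlocks₁₂) i 0 = w i := by
          simp [Matrix.mul_apply, w, Matrix.mulVec, dotProduct, b, Matrix.toBlocks₁₂]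
        have h5 : M'.toBlocks₂₁ 0 i = - b i := hC i
        rw [h4, h5]
        ring
      have h6 : M'.toBlocks₂₂ 0 0 = s := hD
      rw [h3, h6]
      ring
    rw [h1, pow_succ]
    have h7 : 0 ≤ w ⬝ᵥ w := by simpa using dotProduct_star_self_nonneg w
    have : s ≤ s + s * (w ⬝ᵥ w) := by nlinarith
    exact mul_le_mul hdet this hs.le hdpos.le

/-- The inverse `G` of a matrix with symmetric part `s I` satisfies `‖G - Gᵀ‖² ≤ n / s²` in the
Frobenius norm. -/
lemma sum_sq_inv_sub_le {n : ℕ} {s : ℝ} (hs : 0 < s) {M : Matrix (Fin n) (Fin n) ℝ}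
    (hM : M + Mᵀ = (2 * s) • 1) :
    ∑ i, ∑ j, (M⁻¹ i j - M⁻¹ j i) ^ 2 ≤ n / s ^ 2 := by
  have hdet : 0 < M.det := (pow_pos hs n).trans_le (pow_le_det hs n M hM)
  have hu : IsUnit M.det := hdet.ne'.isUnit
  have hut : IsUnit Mᵀ.det := by rwa [Matrix.det_transpose]
  set G := M⁻¹ with hG
  have h1 : G + Gᵀ = (2 * s) • (G * Gᵀ) := by
    have h2 : G * (M + Mᵀ) * Gᵀ = G + Gᵀ := by
      rw [Matrix.mul_add, Matrix.add_mul, Matrix.nonsing_inv_mul _ hu, Matrix.one_mul,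
        Matrix.mul_assoc, hG, Matrix.transpose_nonsing_inv, Matrix.mul_nonsing_inv _ hut,
        Matrix.mul_one, add_comm]
    rw [← h2, hM]
    simp
  have h3 : ∀ i, G i i = s * ∑ j, G i j ^ 2 := by
    intro i
    have := congrFun (congrFun h1 i) i
    simp only [Matrix.add_apply, Matrix.transpose_apply, Matrix.smul_apply, Matrix.mul_apply,
      smul_eq_mul, ← pow_two] at this
    linarith
  have h4 : ∑ i, ∑ j, (G i j - G j i) ^ 2 =
      4 * ∑ i, ∑ j, G i j ^ 2 - ∑ i, ∑ j, (G i j + G j i) ^ 2 := by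
    have h5 : ∑ i, ∑ j, G j i ^ 2 = ∑ i, ∑ j, G i j ^ 2 := Finset.sum_comm
    have h6 : ∑ i, ∑ j, (G i j - G j i) ^ 2 =
        ∑ i, ∑ j, (2 * G i j ^ 2 + 2 * G j i ^ 2 - (G i j + G j i) ^ 2) :=
      Finset.sum_congr rfl fun i _ => Finset.sum_congr rfl fun j _ => by ring
    rw [h6]
    simp only [Finset.sum_sub_distrib, Finset.sum_add_distrib, ← Finset.mul_sum]
    rw [h5]
    ring
  have h7 : ∑ i, 4 * G i i ^ 2 ≤ ∑ i, ∑ j, (G i j + G j i) ^ 2 := by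
    refine Finset.sum_le_sum fun i _ => ?_
    refine le_trans (le_of_eq ?_) (Finset.single_le_sum (f := fun j => (G i j + G j i) ^ 2)
      (fun j _ => sq_nonneg _) (Finset.mem_univ i))
    ring
  have h8 : ∑ i, ∑ j, G i j ^ 2 = ∑ i, G i i / s :=
    Finset.sum_congr rfl fun i _ => by rw [h3 i]; field_simp
  rw [h4, h8]
  calc 4 * ∑ i, G i i / s - ∑ i, ∑ j, (G i j + G j i) ^ 2
      ≤ 4 * ∑ i, G i i / s - ∑ i, 4 * G i i ^ 2 := by linarith
    _ = ∑ i, (4 * (G i i / s) - 4 * G i i ^ 2) := by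
        rw [Finset.sum_sub_distrib, Finset.mul_sum]
    _ ≤ ∑ _i : Fin n, 1 / s ^ 2 := by
        refine Finset.sum_le_sum fun i _ => ?_
        have : 1 / s ^ 2 - (4 * (G i i / s) - 4 * G i i ^ 2) = (2 * G i i - 1 / s) ^ 2 := by
          field_simp
          ring
        nlinarith [sq_nonneg (2 * G i i - 1 / s)]
    _ = _ := by simp [div_eq_mul_inv]

lemma sum_pairIdx_le {N : ℕ} {f : Fin N → Fin N → ℝ} (hf : ∀ i j, 0 ≤ f i j)
    (hsymm : ∀ i j, f i j = f j i) :
    ∑ e : PairIdx N, f e.1.1 e.1.2 ≤ (∑ i, ∑ j, f i j) / 2 := by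
  have h1 : ∑ e : PairIdx N, f e.1.1 e.1.2 =
      ∑ p : Fin N × Fin N with p.1 < p.2, f p.1 p.2 :=
    (Finset.sum_subtype _ (by simp) (fun p : Fin N × Fin N => f p.1 p.2)).symm
  have h2 : ∑ p : Fin N × Fin N with p.1 < p.2, f p.1 p.2 =
      ∑ p : Fin N × Fin N with p.2 < p.1, f p.1 p.2 :=
    Finset.sum_nbij' Prod.swap Prod.swap (by simp) (by simp) (by simp) (by simp)
      (fun p _ => hsymm _ _)
  have h3 : ∑ p : Fin N × Fin N with p.1 < p.2, f p.1 p.2 +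
      ∑ p : Fin N × Fin N with p.2 < p.1, f p.1 p.2 ≤ ∑ p : Fin N × Fin N, f p.1 p.2 := by
    rw [← Finset.sum_union]
    · exact Finset.sum_le_sum_of_subset_of_nonneg (Finset.subset_univ _) fun p _ _ => hf _ _
    · rw [Finset.disjoint_filter]
      intro p _ h
      exact h.not_gt
  rw [Fintype.sum_prod_type] at h3
  linarith

/-! ### The random determinant -/

/-- The random determinant `det(√t I + Y_A(ξ))`. -/
noncomputable def detY {N : ℕ} (A : Matrix (Fin N) (Fin N) ℝ) (t : ℝ) (ξ : PairIdx N → ℝ) : ℝ :=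
  (Real.sqrt t • (1 : Matrix (Fin N) (Fin N) ℝ) + sampleY A ξ).det

section
variable {N : ℕ} {A : Matrix (Fin N) (Fin N) ℝ}

lemma skew_apply (hA : Aᵀ = -A) (i j : Fin N) : A j i = - A i j := congrFun (congrFun hA i) j

lemma sampleY_skew (hA : Aᵀ = -A) (ξ : PairIdx N → ℝ) (i j : Fin N) :
    sampleY A ξ j i = - sampleY A ξ i j := by
  simp only [sampleY, Matrix.of_apply]
  rcases lt_trichotomy i j with h | h | h
  · simp [h, h.not_gt, skew_apply hA i j]
  · simp [h]
  · simp [h, h.not_gt, skew_apply hA i j]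

lemma resolvent_add_transpose (hA : Aᵀ = -A) (s : ℝ) (ξ : PairIdx N → ℝ) :
    (s • (1 : Matrix (Fin N) (Fin N) ℝ) + sampleY A ξ) +
      (s • (1 : Matrix (Fin N) (Fin N) ℝ) + sampleY A ξ)ᵀ = (2 * s) • 1 := by
  ext i j
  simp only [Matrix.add_apply, Matrix.transpose_apply, Matrix.smul_apply, smul_eq_mul,
    sampleY_skew hA ξ i j, Matrix.one_apply, eq_comm (a := j)]
  ring

lemma sampleY_add_smul (ξ η : PairIdx N → ℝ) (r : ℝ) :
    sampleY A (ξ + r • η) = sampleY A ξ + r • sampleY A η := by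
  ext i j
  simp only [sampleY, Matrix.of_apply, Matrix.add_apply, Matrix.smul_apply, smul_eq_mul,
    Pi.add_apply, Pi.smul_apply]
  split_ifs <;> ring

lemma sampleY_single (hA : Aᵀ = -A) (e : PairIdx N) :
    sampleY A (Pi.single e 1) =
      A e.1.1 e.1.2 • (Matrix.single e.1.1 e.1.2 1 - Matrix.single e.1.2 e.1.1 (1 : ℝ)) := by
  obtain ⟨⟨a, b⟩, hab⟩ := e
  ext i j
  simp only [sampleY, Matrix.of_apply, Matrix.sub_apply, Matrix.smul_apply, smul_eq_mul,
    Matrix.single_apply, Pi.single_apply, Subtype.mk.injEq, Prod.mk.injEq]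
  simp only at hab
  rcases lt_trichotomy i j with h | rfl | h
  · have h1 : ¬(b = i ∧ a = j) := by rintro ⟨rfl, rfl⟩; exact h.not_gt hab
    by_cases h2 : i = a ∧ j = b
    · obtain ⟨rfl, rfl⟩ := h2
      simp [h, h1]
    · have h3 : ¬(a = i ∧ b = j) := fun h' => h2 ⟨h'.1.symm, h'.2.symm⟩
      simp only [h, h1, h2, h3, if_false, dif_pos, mul_zero, sub_zero]
  · have h1 : ¬(b = i ∧ a = i) := by rintro ⟨rfl, rfl⟩; exact lt_irrefl _ hab
    have h2 : ¬(a = i ∧ b = i) := fun h' => h1 h'.symm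
    simp [h1, h2]
  · have h1 : ¬(a = i ∧ b = j) := by rintro ⟨rfl, rfl⟩; exact h.not_gt hab
    by_cases h2 : i = b ∧ j = a
    · obtain ⟨rfl, rfl⟩ := h2
      simp [h, h.not_gt, h1, skew_apply hA i j]
    · have h3 : ¬(b = i ∧ a = j) := fun h' => h2 ⟨h'.1.symm, h'.2.symm⟩
      have h4 : ¬(j = a ∧ i = b) := fun h' => h2 h'.symm
      simp only [h, h.not_gt, h1, h3, h4, if_false, dif_pos, dif_neg, not_false_eq_true, mul_zero,
        sub_zero]

lemma contDiff_detY (t : ℝ) : ContDiff ℝ 1 (detY A t) := by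
  unfold detY
  simp only [Matrix.det_apply, Matrix.add_apply, Matrix.smul_apply, sampleY, Matrix.of_apply]
  refine ContDiff.sum fun σ _ => ContDiff.const_smul _ (contDiff_prod fun i _ => ?_)
  refine contDiff_const.add ?_
  split_ifs
  · exact contDiff_const.mul (contDiff_apply _ _ _)
  · exact contDiff_const.mul (contDiff_apply _ _ _)
  · exact contDiff_const

lemma pow_le_detY (hA : Aᵀ = -A) {t : ℝ} (ht : 0 < t) (ξ : PairIdx N → ℝ) :
    √t ^ N ≤ detY A t ξ :=
  pow_le_det (Real.sqrt_pos.2 ht) N _ (resolvent_add_transpose hA _ ξ)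

/-- Polynomial growth of the determinant, by bounding each term of the Leibniz formula. -/
lemma detY_growth {a : ℝ} (ha : ∀ i j, |A i j| ≤ a) (ha0 : 0 ≤ a) (t : ℝ) (ξ : PairIdx N → ℝ) :
    detY A t ξ ≤ (N.factorial * (√t + a) ^ N) * (1 + ‖ξ‖) ^ N := by
  have h := Matrix.det_le (A := √t • (1 : Matrix (Fin N) (Fin N) ℝ) + sampleY A ξ)
    (abv := IsAbsoluteValue.toAbsoluteValue (abs : ℝ → ℝ)) (x := (√t + a) * (1 + ‖ξ‖)) ?_
  · refine (le_abs_self _).trans (h.trans_eq ?_)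
    rw [Fintype.card_fin, nsmul_eq_mul, mul_pow]
    ring
  · intro i j
    change |√t * (1 : Matrix (Fin N) (Fin N) ℝ) i j + sampleY A ξ i j| ≤ _
    have h1 : |√t * (1 : Matrix (Fin N) (Fin N) ℝ) i j| ≤ √t := by
      rw [Matrix.one_apply]
      split_ifs <;> simp [abs_of_nonneg, Real.sqrt_nonneg]
    have h2 : |sampleY A ξ i j| ≤ a * ‖ξ‖ := by
      simp only [sampleY, Matrix.of_apply]
      split_ifs
      · rw [abs_mul]
        exact mul_le_mul (ha _ _) (norm_le_pi_norm ξ _) (abs_nonneg _) ha0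
      · rw [abs_mul]
        exact mul_le_mul (ha _ _) (norm_le_pi_norm ξ _) (abs_nonneg _) ha0
      · simp only [abs_zero]; positivity
    have h3 := abs_add_le (√t * (1 : Matrix (Fin N) (Fin N) ℝ) i j) (sampleY A ξ i j)
    have h4 := mul_nonneg (Real.sqrt_nonneg t) (norm_nonneg ξ)
    nlinarith

/-- Jacobi's formula for the partial derivatives of the random determinant. -/
lemma pd_detY (hA : Aᵀ = -A) {t : ℝ} (ht : 0 < t) (ξ : PairIdx N → ℝ) (e : PairIdx N) :
    pd (detY A t) e ξ = detY A t ξ * (A e.1.1 e.1.2 *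
      ((√t • (1 : Matrix (Fin N) (Fin N) ℝ) + sampleY A ξ)⁻¹ e.1.2 e.1.1 -
        (√t • (1 : Matrix (Fin N) (Fin N) ℝ) + sampleY A ξ)⁻¹ e.1.1 e.1.2)) := by
  set M := √t • (1 : Matrix (Fin N) (Fin N) ℝ) + sampleY A ξ with hM
  have hdet : 0 < M.det := (pow_pos (Real.sqrt_pos.2 ht) N).trans_le (pow_le_detY hA ht ξ)
  have hu : IsUnit M.det := hdet.ne'.isUnit
  have h1 : HasDerivAt (fun r : ℝ => detY A t (ξ + r • Pi.single e 1))
      (pd (detY A t) e ξ) 0 := by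
    have hl : HasDerivAt (fun r : ℝ => ξ + r • (Pi.single e 1 : PairIdx N → ℝ))
        (Pi.single e 1) 0 := by
      simpa using ((hasDerivAt_id (0 : ℝ)).smul_const (Pi.single e 1 : PairIdx N → ℝ)).const_add ξ
    have hd : HasFDerivAt (detY A t) (fderiv ℝ (detY A t) ξ)
        (ξ + (0 : ℝ) • (Pi.single e 1 : PairIdx N → ℝ)) := by
      rw [zero_smul, add_zero]
      exact ((contDiff_detY t).differentiable one_ne_zero ξ).hasFDerivAt
    exact hd.comp_hasDerivAt (0 : ℝ) hl
  set Q := M⁻¹ * sampleY A (Pi.single e 1) with hQ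
  obtain ⟨q, hq⟩ : ∃ q : Polynomial ℝ, ∀ r : ℝ, (1 + r • Q).det = 1 + Q.trace * r + q.eval r * r ^ 2 :=
    ⟨_, fun r => Matrix.det_one_add_smul r Q⟩
  have h2 : ∀ r : ℝ, detY A t (ξ + r • Pi.single e 1) =
      M.det * (1 + Q.trace * r + q.eval r * r ^ 2) := by
    intro r
    rw [← hq, ← Matrix.det_mul, Matrix.mul_add, Matrix.mul_one, Matrix.mul_smul, hQ,
      Matrix.mul_nonsing_inv_cancel_left _ _ hu, detY, sampleY_add_smul, ← add_assoc]
  have h3 : HasDerivAt (fun r : ℝ => detY A t (ξ + r • Pi.single e 1)) (M.det * Q.trace) 0 := by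
    simp only [h2]
    have h4 := ((((hasDerivAt_id (0 : ℝ)).const_mul Q.trace).const_add 1).add
      ((q.hasDerivAt 0).mul ((hasDerivAt_id (0 : ℝ)).pow 2))).const_mul M.det
    refine h4.congr_deriv ?_
    simp
  rw [h1.unique h3, detY, ← hM]
  congr 1
  rw [hQ, sampleY_single hA, Matrix.mul_smul, Matrix.trace_smul, Matrix.mul_sub, Matrix.trace_sub,
    Matrix.trace_mul_single, Matrix.trace_mul_single]
  simp

/-- The logarithmic gradient of the random determinant has squared norm at most `N a² / (2t)`. -/
lemma sum_pd_sq_le (hA : Aᵀ = -A) {a : ℝ} (ha : ∀ i j, |A i j| ≤ a) {t : ℝ} (ht : 0 < t)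
    (ξ : PairIdx N → ℝ) :
    ∑ e, pd (detY A t) e ξ ^ 2 ≤ (N * (a ^ 2 / (2 * t))) * detY A t ξ ^ 2 := by
  set M := √t • (1 : Matrix (Fin N) (Fin N) ℝ) + sampleY A ξ with hM
  have h1 := sum_sq_inv_sub_le (Real.sqrt_pos.2 ht) (resolvent_add_transpose hA √t ξ)
  rw [← hM, Real.sq_sqrt ht.le] at h1
  have h2 := sum_pairIdx_le (f := fun i j => (M⁻¹ i j - M⁻¹ j i) ^ 2) (fun i j => sq_nonneg _)
    (fun i j => by ring)
  calc ∑ e, pd (detY A t) e ξ ^ 2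
      ≤ ∑ e : PairIdx N, detY A t ξ ^ 2 * (a ^ 2 * (M⁻¹ e.1.1 e.1.2 - M⁻¹ e.1.2 e.1.1) ^ 2) := by
        refine Finset.sum_le_sum fun e _ => ?_
        rw [pd_detY hA ht, ← hM, mul_pow, mul_pow]
        have h3 : A e.1.1 e.1.2 ^ 2 ≤ a ^ 2 := sq_le_sq' (abs_le.1 (ha _ _)).1 (abs_le.1 (ha _ _)).2
        rw [show (M⁻¹ e.1.2 e.1.1 - M⁻¹ e.1.1 e.1.2) ^ 2 = (M⁻¹ e.1.1 e.1.2 - M⁻¹ e.1.2 e.1.1) ^ 2 by ring]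
        gcongr
    _ = detY A t ξ ^ 2 * (a ^ 2 * ∑ e : PairIdx N, (M⁻¹ e.1.1 e.1.2 - M⁻¹ e.1.2 e.1.1) ^ 2) := by
        rw [Finset.mul_sum, Finset.mul_sum]
    _ ≤ detY A t ξ ^ 2 * (a ^ 2 * (N / t / 2)) := by
        gcongr
        exact h2.trans (by gcongr)
    _ = _ := by field_simp

end

/-! ### The expected determinant and matchings -/

/-- The pairs `(i, j)` with `i < j` and `σ i = j`; for an involution `σ` these are its
two-cycles, each listed once. -/
def pairsOf {N : ℕ} (σ : Equiv.Perm (Fin N)) : Finset (Fin N × Fin N) :=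
  Finset.univ.filter fun p => p.1 < p.2 ∧ σ p.1 = p.2

/-- The set `M` of increasing pairs is a matching: distinct pairs have no common endpoint. -/
abbrev IsMatchingSet {N : ℕ} (M : Finset (Fin N × Fin N)) : Prop :=
  (∀ p ∈ M, p.1 < p.2) ∧
    ∀ p ∈ M, ∀ q ∈ M, p ≠ q → p.1 ≠ q.1 ∧ p.1 ≠ q.2 ∧ p.2 ≠ q.1 ∧ p.2 ≠ q.2

section Expansion
variable {N : ℕ} {A : Matrix (Fin N) (Fin N) ℝ} {σ τ : Equiv.Perm (Fin N)}

lemma mem_pairsOf {p : Fin N × Fin N} : p ∈ pairsOf σ ↔ p.1 < p.2 ∧ σ p.1 = p.2 := by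
  simp [pairsOf]

lemma prod_prod_eq_diag_mul (g : Fin N → Fin N → ℝ) :
    ∏ i, ∏ j, g i j = (∏ i, g i i) * ∏ e : PairIdx N, g e.1.1 e.1.2 * g e.1.2 e.1.1 := by
  have h1 : ∏ e : PairIdx N, g e.1.1 e.1.2 * g e.1.2 e.1.1 =
      ∏ i, ∏ j, if i < j then g i j * g j i else 1 := by
    rw [← Finset.prod_subtype (Finset.univ.filter fun p : Fin N × Fin N => p.1 < p.2) (by simp)
      (fun p : Fin N × Fin N => g p.1 p.2 * g p.2 p.1), Finset.prod_filter,
      Fintype.prod_prod_type]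
  have h2 : ∏ i, ∏ j, (if i < j then g i j * g j i else 1) =
      (∏ i, ∏ j, if i < j then g i j else 1) * ∏ i, ∏ j, if j < i then g i j else 1 := by
    conv_rhs => rw [Finset.prod_comm (f := fun i j => if j < i then g i j else 1)]
    simp only [← Finset.prod_mul_distrib]
    refine Finset.prod_congr rfl fun i _ => Finset.prod_congr rfl fun j _ => ?_
    split_ifs <;> simp
  have h3 : ∏ i, g i i = ∏ i, ∏ j, if i = j then g i j else 1 := by
    simp [Finset.prod_ite_eq]
  rw [h1, h2, h3]
  simp only [← Finset.prod_mul_distrib]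
  refine Finset.prod_congr rfl fun i _ => Finset.prod_congr rfl fun j _ => ?_
  rcases lt_trichotomy i j with h | rfl | h
  · simp [h, h.not_gt, h.ne]
  · simp
  · simp [h, h.not_gt, h.ne']

/-- Grouping the factors of a term of the Leibniz formula by the fixed points of `σ` and by
unordered pairs. -/
lemma prod_perm_eq (f : Matrix (Fin N) (Fin N) ℝ) (σ : Equiv.Perm (Fin N)) :
    ∏ i, f (σ i) i = (∏ i, if σ i = i then f i i else 1) *
      ∏ e : PairIdx N, (if σ e.1.1 = e.1.2 then f e.1.2 e.1.1 else 1) *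
        (if σ e.1.2 = e.1.1 then f e.1.1 e.1.2 else 1) := by
  rw [← prod_prod_eq_diag_mul fun i j => if σ i = j then f j i else 1]
  simp [Finset.prod_ite_eq]

/-- The `N` points are the fixed points of the involution and two points for each two-cycle. -/
lemma card_fixed_add (hσ : Function.Involutive σ) :
    (Finset.univ.filter fun i => σ i = i).card + 2 * (pairsOf σ).card = N := by
  have h1 : (pairsOf σ).card = (Finset.univ.filter fun i => i < σ i).card := by
    refine Finset.card_nbij' (fun p => p.1) (fun i => (i, σ i)) ?_ ?_ ?_ ?_
    · rintro ⟨i, j⟩ h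
      obtain ⟨h1, h2⟩ := mem_pairsOf.1 h
      simp only at h1 h2
      simpa [h2] using h1
    · intro i h
      simpa [mem_pairsOf] using h
    · rintro ⟨i, j⟩ h
      obtain ⟨h1, h2⟩ := mem_pairsOf.1 h
      simpa using h2
    · intro i h
      rfl
  have h2 : (Finset.univ.filter fun i => σ i < i).card =
      (Finset.univ.filter fun i => i < σ i).card := by
    refine Finset.card_nbij' σ σ ?_ ?_ ?_ ?_
    · intro i h
      simpa [hσ i] using h
    · intro i h
      simpa [hσ i] using h
    · intro i h
      exact hσ i
    · intro i h
      exact hσ i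
  have h3 : (Finset.univ : Finset (Fin N)) = (Finset.univ.filter fun i => σ i = i) ∪
      ((Finset.univ.filter fun i => i < σ i) ∪ (Finset.univ.filter fun i => σ i < i)) := by
    ext i
    simp only [Finset.mem_univ, Finset.mem_union, Finset.mem_filter, true_and, true_iff]
    rcases lt_trichotomy i (σ i) with h | h | h
    · exact Or.inr (Or.inl h)
    · exact Or.inl h.symm
    · exact Or.inr (Or.inr h)
  have h4 := congrArg Finset.card h3
  rw [Finset.card_union_of_disjoint, Finset.card_union_of_disjoint, Finset.card_univ,
    Fintype.card_fin] at h4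
  · omega
  · rw [Finset.disjoint_filter]
    intro i _ h
    exact h.not_gt
  · rw [Finset.disjoint_union_right, Finset.disjoint_filter, Finset.disjoint_filter]
    exact ⟨fun i _ h => by simp [h], fun i _ h => by simp [h]⟩

lemma sign_of_involutive (hσ : Function.Involutive σ) :
    ((Equiv.Perm.sign σ : ℤ) : ℝ) = (-1) ^ (pairsOf σ).card := by
  have h1 : σ ^ 2 = 1 := by
    ext i
    simp [pow_two, hσ i]
  have h2 : Fintype.card (Function.fixedPoints σ) =
      (Finset.univ.filter fun i => σ i = i).card := by
    rw [Fintype.card_subtype]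
    rfl
  have h3 := card_fixed_add hσ
  rw [Equiv.Perm.sign_of_pow_two_eq_one h1, h2, Fintype.card_fin]
  have h4 : (N - (Finset.univ.filter fun i => σ i = i).card) / 2 = (pairsOf σ).card := by omega
  rw [h4]
  simp

lemma isMatchingSet_pairsOf (hσ : Function.Involutive σ) : IsMatchingSet (pairsOf σ) := by
  refine ⟨fun p hp => (mem_pairsOf.1 hp).1, ?_⟩
  rintro ⟨i, j⟩ hp ⟨k, l⟩ hq hne
  obtain ⟨h1, h2⟩ := mem_pairsOf.1 hp
  obtain ⟨h3, h4⟩ := mem_pairsOf.1 hq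
  simp only at h1 h2 h3 h4 ⊢
  have h5 : σ j = i := by rw [← h2, hσ]
  have h6 : σ l = k := by rw [← h4, hσ]
  refine ⟨?_, ?_, ?_, ?_⟩ <;> rintro rfl
  · exact hne (by rw [← h2, ← h4])
  · rw [h6] at h2
    subst h2
    exact h1.not_gt h3
  · rw [h5] at h4
    subst h4
    exact h1.not_gt h3
  · exact hne (by rw [← h5, ← h6])

/-- One half of the injectivity of `pairsOf`: the permutations agree off the fixed points of `τ`. -/
lemma eq_of_pairsOf_eq_of_ne (hτ : Function.Involutive τ)
    (h : pairsOf σ = pairsOf τ) (hσ : Function.Involutive σ) {i : Fin N} (hi : τ i ≠ i) :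
    σ i = τ i := by
  rcases lt_or_gt_of_ne hi with h1 | h1
  · have : (τ i, i) ∈ pairsOf σ := by rw [h, mem_pairsOf]; exact ⟨h1, hτ i⟩
    have h2 := (mem_pairsOf.1 this).2
    simp only at h2
    rw [← hσ (τ i), h2]
  · have : (i, τ i) ∈ pairsOf σ := by rw [h, mem_pairsOf]; exact ⟨h1, rfl⟩
    exact (mem_pairsOf.1 this).2

lemma pairsOf_inj (hσ : Function.Involutive σ) (hτ : Function.Involutive τ)
    (h : pairsOf σ = pairsOf τ) : σ = τ := by
  ext i
  congr 1
  by_cases h1 : τ i = i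
  · by_cases h2 : σ i = i
    · rw [h1, h2]
    · exact (eq_of_pairsOf_eq_of_ne hσ h.symm hτ h2).symm
  · exact eq_of_pairsOf_eq_of_ne hτ h hσ h1

/-- Every matching is the set of two-cycles of the involution that exchanges matched points and
fixes the others. -/
lemma exists_involutive_pairsOf_eq {M : Finset (Fin N × Fin N)} (hM : IsMatchingSet M) :
    ∃ σ : Equiv.Perm (Fin N), Function.Involutive σ ∧ pairsOf σ = M := by
  classical
  -- `R i j` says that `i` and `j` are matched.
  let R : Fin N → Fin N → Prop := fun i j => (i, j) ∈ M ∨ (j, i) ∈ M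
  have hsymm : ∀ {i j}, R i j → R j i := fun h => h.symm
  have hfun : ∀ {i j k}, R i j → R i k → j = k := by
    intro i j k h1 h2
    by_contra hjk
    rcases h1 with h1 | h1 <;> rcases h2 with h2 | h2
    · exact (hM.2 _ h1 _ h2 (by simpa using hjk)).1 rfl
    · have h3 := hM.1 _ h1
      have h4 := hM.1 _ h2
      refine (hM.2 _ h1 _ h2 ?_).2.1 rfl
      rintro h5
      simp only [Prod.mk.injEq] at h5
      exact hjk (h5.2.trans h5.1)
    · refine (hM.2 _ h1 _ h2 ?_).2.2.1 rfl
      rintro h5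
      simp only [Prod.mk.injEq] at h5
      exact hjk (h5.1.trans h5.2)
    · exact (hM.2 _ h1 _ h2 (by simpa using hjk)).2.2.2 rfl
  let f : Fin N → Fin N := fun i => if h : ∃ j, R i j then h.choose else i
  have hf : ∀ {i j}, R i j → f i = j := by
    intro i j h
    have h1 : ∃ j, R i j := ⟨j, h⟩
    simp only [f, dif_pos h1]
    exact hfun h1.choose_spec h
  have hf' : ∀ {i}, (¬ ∃ j, R i j) → f i = i := fun h => by simp only [f, dif_neg h]
  have hinv : Function.Involutive f := by
    intro i
    by_cases h : ∃ j, R i j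
    · obtain ⟨j, hj⟩ := h
      rw [hf hj, hf (hsymm hj)]
    · rw [hf' h, hf' h]
  refine ⟨hinv.toPerm f, hinv, ?_⟩
  ext ⟨i, j⟩
  rw [mem_pairsOf]
  change i < j ∧ f i = j ↔ _
  constructor
  · rintro ⟨h1, h2⟩
    have h3 : R i j := by
      by_contra hR
      by_cases h : ∃ k, R i k
      · obtain ⟨k, hk⟩ := h
        rw [hf hk] at h2
        exact hR (h2 ▸ hk)
      · rw [hf' h] at h2
        exact h1.ne h2
    rcases h3 with h3 | h3
    · exact h3
    · exact absurd (hM.1 _ h3) h1.not_gt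
  · intro h
    exact ⟨hM.1 _ h, hf (Or.inl h)⟩

lemma two_mul_card_le {M : Finset (Fin N × Fin N)} (hM : IsMatchingSet M) : 2 * M.card ≤ N := by
  obtain ⟨σ, hσ, rfl⟩ := exists_involutive_pairsOf_eq hM
  have := card_fixed_add hσ
  omega

lemma sqrt_pow_eq {t : ℝ} (ht : 0 < t) {k : ℕ} (hk : 2 * k ≤ N) :
    √t ^ (N - 2 * k) = (if Even N then 1 else √t) * t ^ (N / 2 - k) := by
  have h1 : t ^ (N / 2 - k) = √t ^ (2 * (N / 2 - k)) := by rw [pow_mul, Real.sq_sqrt ht.le]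
  rw [h1]
  split_ifs with h
  · obtain ⟨m, rfl⟩ := h
    rw [one_mul]
    congr 1
    omega
  · rw [Nat.not_even_iff_odd] at h
    obtain ⟨m, rfl⟩ := h
    rw [← pow_succ']
    congr 1
    omega

lemma sum_matchings_eq_PhiFull (A : Matrix (Fin N) (Fin N) ℝ) {t : ℝ} (ht : 0 < t) :
    ∑ M ∈ Finset.univ.filter (fun M : Finset (Fin N × Fin N) => IsMatchingSet M),
      √t ^ (N - 2 * M.card) * ∏ p ∈ M, A p.1 p.2 ^ 2 = PhiFull A t := by
  rw [← Finset.sum_fiberwise_of_maps_to (t := Finset.range (N / 2 + 1))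
    (g := fun M : Finset (Fin N × Fin N) => M.card)]
  · rw [PhiFull, PhiW, Finset.mul_sum]
    refine Finset.sum_congr rfl fun k hk => ?_
    have hk : 2 * k ≤ N := by
      have := Finset.mem_range.1 hk
      omega
    rw [Finset.filter_filter, phiW, mul_left_comm, ← sqrt_pow_eq ht hk, Finset.sum_mul]
    refine Finset.sum_congr rfl fun M hM => ?_
    rw [(Finset.mem_filter.1 hM).2.2, mul_comm]
  · intro M hM
    have := two_mul_card_le (Finset.mem_filter.1 hM).2
    rw [Finset.mem_range]
    omega

lemma sum_involutive_eq {F : Finset (Fin N × Fin N) → ℝ} :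
    ∑ σ ∈ Finset.univ.filter (fun σ : Equiv.Perm (Fin N) => ∀ i, σ (σ i) = i), F (pairsOf σ) =
      ∑ M ∈ Finset.univ.filter (fun M : Finset (Fin N × Fin N) => IsMatchingSet M), F M := by
  refine Finset.sum_bij (fun σ _ => pairsOf σ) ?_ ?_ ?_ ?_
  · intro σ hσ
    exact Finset.mem_filter.2 ⟨Finset.mem_univ _, isMatchingSet_pairsOf (Finset.mem_filter.1 hσ).2⟩
  · intro σ hσ τ hτ h
    exact pairsOf_inj (Finset.mem_filter.1 hσ).2 (Finset.mem_filter.1 hτ).2 h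
  · intro M hM
    obtain ⟨σ, h1, h2⟩ := exists_involutive_pairsOf_eq (Finset.mem_filter.1 hM).2
    exact ⟨σ, Finset.mem_filter.2 ⟨Finset.mem_univ _, h1⟩, h2⟩
  · intro σ _
    rfl

lemma integrable_sq_gaussianReal : Integrable (fun x : ℝ => x * x) (gaussianReal 0 1) := by
  have h := (memLp_id_gaussianReal (μ := 0) (v := 1) 2).integrable_sq
  simpa [pow_two] using h

lemma integrable_id_gaussianReal : Integrable (fun x : ℝ => x) (gaussianReal 0 1) :=
  (memLp_id_gaussianReal (μ := 0) (v := 1) 1).integrable le_rfl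

lemma integral_sq_gaussianReal : ∫ x : ℝ, x * x ∂(gaussianReal 0 1) = 1 := by
  have h := variance_id_gaussianReal (μ := 0) (v := 1)
  rw [variance_eq_integral aemeasurable_id] at h
  simpa [integral_id_gaussianReal, pow_two] using h

/-- The factor contributed by one Gaussian variable to the term of the permutation `σ` in the
Leibniz expansion of the determinant. -/
noncomputable def edgeFactor (A : Matrix (Fin N) (Fin N) ℝ) (σ : Equiv.Perm (Fin N))
    (e : PairIdx N) (x : ℝ) : ℝ :=
  (if σ e.1.1 = e.1.2 then A e.1.2 e.1.1 * x else 1) *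
    (if σ e.1.2 = e.1.1 then A e.1.1 e.1.2 * x else 1)

lemma integrable_edgeFactor (e : PairIdx N) : Integrable (edgeFactor A σ e) (gaussianReal 0 1) := by
  unfold edgeFactor
  split_ifs
  · refine (integrable_sq_gaussianReal.const_mul (A e.1.2 e.1.1 * A e.1.1 e.1.2)).congr ?_
    filter_upwards with x
    ring
  · simpa using integrable_id_gaussianReal.const_mul _
  · simpa using integrable_id_gaussianReal.const_mul _
  · simp

lemma integral_edgeFactor (hA : Aᵀ = -A) (e : PairIdx N) :
    ∫ x, edgeFactor A σ e x ∂(gaussianReal 0 1) =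
      if σ e.1.1 = e.1.2 then (if σ e.1.2 = e.1.1 then - A e.1.1 e.1.2 ^ 2 else 0)
        else (if σ e.1.2 = e.1.1 then 0 else 1) := by
  unfold edgeFactor
  split_ifs
  · have : ∀ x : ℝ, A e.1.2 e.1.1 * x * (A e.1.1 e.1.2 * x) = - A e.1.1 e.1.2 ^ 2 * (x * x) := by
      intro x
      rw [skew_apply hA e.1.1 e.1.2]
      ring
    simp only [this]
    rw [integral_const_mul, integral_sq_gaussianReal, mul_one]
  · simp only [mul_one]
    rw [integral_const_mul, integral_id_gaussianReal, mul_zero]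
  · simp only [one_mul]
    rw [integral_const_mul, integral_id_gaussianReal, mul_zero]
  · simp

lemma detY_eq_sum (t : ℝ) (ξ : PairIdx N → ℝ) :
    detY A t ξ = ∑ σ : Equiv.Perm (Fin N), (((Equiv.Perm.sign σ : ℤ) : ℝ) *
      √t ^ (Finset.univ.filter fun i => σ i = i).card) * ∏ e, edgeFactor A σ e (ξ e) := by
  rw [detY, Matrix.det_apply']
  refine Finset.sum_congr rfl fun σ _ => ?_
  rw [prod_perm_eq (√t • 1 + sampleY A ξ), mul_assoc]
  congr 2
  · simp [Finset.prod_ite, sampleY]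
  · refine Finset.prod_congr rfl fun e _ => ?_
    have h := e.2
    simp only [edgeFactor, sampleY, Matrix.add_apply, Matrix.smul_apply, Matrix.of_apply,
      Matrix.one_apply_ne h.ne, Matrix.one_apply_ne h.ne', h, h.not_gt, dif_pos,
      dif_neg, not_false_eq_true, smul_zero, zero_add]

/-- The expectation of the Leibniz term of `σ`: if `σ (σ i) ≠ i` for some `i`, the Gaussian variable
of the pair `{i, σ i}` occurs exactly once and the expectation vanishes; otherwise the sign of `σ`
cancels the signs coming from `a_{ij} a_{ji} = -a_{ij}²`. -/
lemma integral_term (hA : Aᵀ = -A) (t : ℝ) (σ : Equiv.Perm (Fin N)) :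
    (((Equiv.Perm.sign σ : ℤ) : ℝ) * √t ^ (Finset.univ.filter fun i => σ i = i).card) *
      ∏ e : PairIdx N, ∫ x, edgeFactor A σ e x ∂(gaussianReal 0 1) =
    if ∀ i, σ (σ i) = i then
      √t ^ (N - 2 * (pairsOf σ).card) * ∏ p ∈ pairsOf σ, A p.1 p.2 ^ 2 else 0 := by
  simp only [integral_edgeFactor hA]
  split_ifs with hσ
  · have h1 : (Finset.univ.filter fun i => σ i = i).card = N - 2 * (pairsOf σ).card := by
      have := card_fixed_add hσ
      omega
    have h2 : (∏ e : PairIdx N, if σ e.1.1 = e.1.2 then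
        (if σ e.1.2 = e.1.1 then - A e.1.1 e.1.2 ^ 2 else 0)
        else (if σ e.1.2 = e.1.1 then 0 else 1)) = ∏ p ∈ pairsOf σ, -(A p.1 p.2 ^ 2) := by
      have h3 : ∀ e : PairIdx N, (if σ e.1.1 = e.1.2 then
          (if σ e.1.2 = e.1.1 then - A e.1.1 e.1.2 ^ 2 else 0)
          else (if σ e.1.2 = e.1.1 then 0 else 1)) =
          if σ e.1.1 = e.1.2 then -(A e.1.1 e.1.2 ^ 2) else 1 := by
        intro e
        by_cases h4 : σ e.1.1 = e.1.2
        · have h5 : σ e.1.2 = e.1.1 := by rw [← h4, hσ]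
          simp [h4, h5]
        · have h5 : ¬ σ e.1.2 = e.1.1 := fun h => h4 (by rw [← h, hσ])
          simp [h4, h5]
      simp only [h3]
      rw [← Finset.prod_subtype (Finset.univ.filter fun p : Fin N × Fin N => p.1 < p.2) (by simp)
        (fun p : Fin N × Fin N => if σ p.1 = p.2 then -(A p.1 p.2 ^ 2) else 1),
        ← Finset.prod_filter, Finset.filter_filter]
      rfl
    rw [h1, h2, sign_of_involutive hσ, Finset.prod_neg]
    have h3 : ((-1 : ℝ) ^ (pairsOf σ).card) * (-1) ^ (pairsOf σ).card = 1 := by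
      rw [← mul_pow]
      simp
    linear_combination (√t ^ (N - 2 * (pairsOf σ).card) * ∏ p ∈ pairsOf σ, A p.1 p.2 ^ 2) * h3
  · push Not at hσ
    obtain ⟨i, hi⟩ := hσ
    refine mul_eq_zero_of_right _ ?_
    have hne : σ i ≠ i := fun h => hi (by rw [h, h])
    rcases lt_or_gt_of_ne hne with h | h
    · refine Finset.prod_eq_zero (Finset.mem_univ (⟨(σ i, i), h⟩ : PairIdx N)) ?_
      simp [hi]
    · refine Finset.prod_eq_zero (Finset.mem_univ (⟨(i, σ i), h⟩ : PairIdx N)) ?_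
      simp [hi]

/-- `E det(√t I + Y_A)` is the matching polynomial `Φ(t, A)`, times `√t` for odd `N`. -/
lemma integral_detY (hA : Aᵀ = -A) {t : ℝ} (ht : 0 < t) :
    ∫ ξ, detY A t ξ ∂(stdG (PairIdx N)) = PhiFull A t := by
  simp only [detY_eq_sum]
  rw [integral_finsetSum]
  · simp only [integral_const_mul, stdG]
    simp only [integral_fintype_prod_eq_prod (fun e => edgeFactor A _ e), integral_term hA]
    rw [← Finset.sum_filter,
      sum_involutive_eq (F := fun M => √t ^ (N - 2 * M.card) * ∏ p ∈ M, A p.1 p.2 ^ 2),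
      sum_matchings_eq_PhiFull A ht]
  · intro σ _
    exact (Integrable.fintype_prod (f := edgeFactor A σ) fun e => integrable_edgeFactor e).const_mul _

end Expansion

/-- `(1/N) log Φ̃(t,A) ≤ (1/N) log Φ(t,A) ≤ (1/N) log Φ̃(t,A) + a²/(2t)`,
where for `N` odd `Φ(t,A)` is replaced by `√t·Φ(t,A)`. -/
theorem log_matching_polynomial_gap_le
    {N : ℕ} (A : Matrix (Fin N) (Fin N) ℝ) (hA : Aᵀ = -A) (hA0 : A ≠ 0)
    (a : ℝ) (ha : ∀ i j, |A i j| ≤ a) (ha' : ∃ i j, |A i j| = a)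
    (t : ℝ) (ht : 0 < t) :
    (1 / (N : ℝ)) * logPhiTilde t A ≤ (1 / (N : ℝ)) * Real.log (PhiFull A t) ∧
      (1 / (N : ℝ)) * Real.log (PhiFull A t) ≤
        (1 / (N : ℝ)) * logPhiTilde t A + a ^ 2 / (2 * t) := by
  obtain ⟨i, j, hij⟩ := ha'
  have ha0 : 0 ≤ a := hij ▸ abs_nonneg _
  have hN : (0 : ℝ) < N := by exact_mod_cast i.pos
  have h := log_integral_gap (contDiff_detY (A := A) t) (pow_pos (Real.sqrt_pos.2 ht) N)
    (pow_le_detY hA ht) (detY_growth ha ha0 t) (K := N * (a ^ 2 / (2 * t))) (by positivity)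
    (sum_pd_sq_le hA ha ht)
  rw [integral_detY hA ht] at h
  change logPhiTilde t A ≤ _ ∧ _ ≤ logPhiTilde t A + _ at h
  have hK : (1 / (N : ℝ)) * (N * (a ^ 2 / (2 * t))) = a ^ 2 / (2 * t) := by field_simp
  refine ⟨mul_le_mul_of_nonneg_left h.1 (by positivity), ?_⟩
  rw [← hK, ← mul_add]
  exact mul_le_mul_of_nonneg_left h.2 (by positivity)
end

section
/- Let X be a real Gaussian random variable (not almost surely constant). Then log E X² − E log X² ≤ C₁, where C₁ := −(1/√(2π)) ∫_ℝ log(x²) e^{−x²/2} dx. -/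
/-!
After scaling, `X` has law `N(t, 1)`, and the claim says that
`K(t) = E log ((t + Z)²) - log (1 + t²)`, with `Z` standard Gaussian, is minimal at `t = 0`.

Write `c = √(2π)`, `w(x) = log(x²) e^{-x²/2}` and `L(t) = ∫ w(x) e^{tx} dx`, so that
`E log ((t + Z)²) = c⁻¹ e^{-t²/2} L(t)`. `L` may be differentiated under the integral sign
(`hasDerivAt_laplace`), and integrating the derivative of `x w(x) e^{tx}` over the line gives the
differential equation `L'' - t L' - L = 2 c e^{t²/2}` (`laplace_ode`). Hence
`Q(t) = e^{t²/2} K'(t) = c⁻¹ (L' - t L) - 2 t e^{t²/2} / (1 + t²)` has derivative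
`2 e^{t²/2} (1 - (1 + t⁴) / (1 + t²)²) ≥ 0`, while `Q(0) = c⁻¹ L'(0) = 0` because `x w(x)` is odd.
So `K'` has the sign of `t`, and `K` is minimal at `0` (`gap_min`).
-/

open MeasureTheory ProbabilityTheory

/-! ### Laplace transforms on the line -/

lemma abs_mul_exp_le {t₀ t x : ℝ} (ht : |t - t₀| ≤ 1) :
    |x| * Real.exp (t * x) ≤ Real.exp ((t₀ + 2) * x) + Real.exp ((t₀ - 2) * x) := by
  have h1 : |x| ≤ Real.exp |x| := by linarith [Real.add_one_le_exp |x|]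
  have h2 : t * x ≤ t₀ * x + |x| := by
    have : (t - t₀) * x ≤ |x| := by
      calc (t - t₀) * x ≤ |(t - t₀) * x| := le_abs_self _
        _ = |t - t₀| * |x| := abs_mul _ _
        _ ≤ 1 * |x| := by gcongr
        _ = |x| := one_mul _
    linarith
  calc |x| * Real.exp (t * x) ≤ Real.exp |x| * Real.exp (t₀ * x + |x|) := by gcongr
    _ = Real.exp (t₀ * x + 2 * |x|) := by rw [← Real.exp_add]; ring_nf
    _ ≤ _ := by
      rcases abs_cases x with ⟨h, _⟩ | ⟨h, _⟩ <;> rw [h]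
      · have : t₀ * x + 2 * x = (t₀ + 2) * x := by ring
        rw [this]; linarith [Real.exp_pos ((t₀ - 2) * x)]
      · have : t₀ * x + 2 * -x = (t₀ - 2) * x := by ring
        rw [this]; linarith [Real.exp_pos ((t₀ + 2) * x)]

/-- Differentiation under the integral sign for the two-sided Laplace transform of a (signed)
function all of whose exponential moments are finite. -/
lemma hasDerivAt_laplace {w : ℝ → ℝ} (hw : Measurable w)
    (hi : ∀ t : ℝ, Integrable (fun x => w x * Real.exp (t * x))) (t : ℝ) :
    Integrable (fun x => (x * w x) * Real.exp (t * x)) ∧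
    HasDerivAt (fun t => ∫ x, w x * Real.exp (t * x))
      (∫ x, (x * w x) * Real.exp (t * x)) t := by
  refine hasDerivAt_integral_of_dominated_loc_of_deriv_le
    (bound := fun x => ‖w x * Real.exp ((t + 2) * x)‖ + ‖w x * Real.exp ((t - 2) * x)‖)
    (F' := fun t x => (x * w x) * Real.exp (t * x))
    (Metric.closedBall_mem_nhds t one_pos) ?_ (hi t) ?_ ?_ ?_ ?_
  · exact Filter.Eventually.of_forall fun s => (hi s).aestronglyMeasurable
  · exact Measurable.aestronglyMeasurable (by fun_prop)
  · refine Filter.Eventually.of_forall fun x s hs => ?_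
    have hs' : |s - t| ≤ 1 := by simpa [Real.dist_eq] using hs
    have := mul_le_mul_of_nonneg_left (abs_mul_exp_le (x := x) hs') (abs_nonneg (w x))
    simp only [norm_mul, Real.norm_eq_abs, Real.abs_exp]
    linarith
  · exact (hi _).norm.add (hi _).norm
  · refine Filter.Eventually.of_forall fun x s _ => ?_
    have h := (((hasDerivAt_id s).mul_const x).exp).const_mul (w x)
    exact h.congr_deriv (by simp only [id]; ring)

lemma integral_gauss_exp (t : ℝ) :
    Integrable (fun x : ℝ => Real.exp (-x ^ 2 / 2) * Real.exp (t * x)) ∧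
    ∫ x : ℝ, Real.exp (-x ^ 2 / 2) * Real.exp (t * x) =
      Real.sqrt (2 * Real.pi) * Real.exp (t ^ 2 / 2) := by
  have hc : Real.sqrt (2 * Real.pi) ≠ 0 := by positivity
  have key : (fun x : ℝ => Real.exp (-x ^ 2 / 2) * Real.exp (t * x)) =
      fun x => (Real.sqrt (2 * Real.pi) * Real.exp (t ^ 2 / 2)) * gaussianPDFReal t 1 x := by
    ext x
    simp only [gaussianPDFReal, NNReal.coe_one, mul_one]
    have : Real.exp (-x ^ 2 / 2) * Real.exp (t * x) =
        Real.exp (t ^ 2 / 2) * Real.exp (-(x - t) ^ 2 / 2) := by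
      rw [← Real.exp_add, ← Real.exp_add]; ring_nf
    rw [this]; field_simp
  rw [key]
  refine ⟨(integrable_gaussianPDFReal t 1).const_mul _, ?_⟩
  rw [integral_const_mul, integral_gaussianPDFReal_eq_one t one_ne_zero, mul_one]

/-! ### The transform of the logarithmically weighted Gaussian -/

/-- The logarithmically weighted Gaussian `log(x²) e^{-x²/2}`. -/
noncomputable def logWeight (x : ℝ) : ℝ := Real.log (x ^ 2) * Real.exp (-x ^ 2 / 2)

lemma measurable_logWeight : Measurable logWeight := by
  unfold logWeight; fun_prop

lemma integrable_logWeight (t : ℝ) :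
    Integrable (fun x => logWeight x * Real.exp (t * x)) := by
  have h1 : Integrable ((Set.Ioc (-1 : ℝ) 1).indicator Real.log) := by
    rw [integrable_indicator_iff measurableSet_Ioc]
    exact (intervalIntegrable_iff_integrableOn_Ioc_of_le (by norm_num)).1
      intervalIntegral.intervalIntegrable_log'
  have h2 := (hasDerivAt_laplace (w := fun x => Real.exp (-x ^ 2 / 2)) (by fun_prop)
    (fun t => (integral_gauss_exp t).1) t).1
  refine Integrable.mono' ((h1.norm.const_mul (2 * Real.exp |t|)).add (h2.norm.const_mul 2))
    ((measurable_logWeight.mul (by fun_prop)).aestronglyMeasurable)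
    (Filter.Eventually.of_forall fun x => ?_)
  simp only [logWeight, Real.log_pow, norm_mul, Real.norm_eq_abs, Real.abs_exp, Pi.add_apply,
    Nat.cast_ofNat, abs_two]
  by_cases hx : x ∈ Set.Ioc (-1 : ℝ) 1
  · rw [Set.indicator_of_mem hx]
    have hx1 : |x| ≤ 1 := abs_le.2 ⟨hx.1.le, hx.2⟩
    have e1 : Real.exp (-x ^ 2 / 2) ≤ 1 := Real.exp_le_one_iff.2 (by nlinarith [sq_nonneg x])
    have e2 : Real.exp (t * x) ≤ Real.exp |t| := by
      apply Real.exp_le_exp.2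
      calc t * x ≤ |t * x| := le_abs_self _
        _ = |t| * |x| := abs_mul _ _
        _ ≤ |t| * 1 := by gcongr
        _ = |t| := mul_one _
    have : 2 * |Real.log x| * Real.exp (-x ^ 2 / 2) * Real.exp (t * x) ≤
        2 * |Real.log x| * 1 * Real.exp |t| := by gcongr
    have h0 : 0 ≤ 2 * (|x| * Real.exp (-x ^ 2 / 2) * Real.exp (t * x)) := by positivity
    linarith
  · rw [Set.indicator_of_notMem hx]
    have hx1 : 1 ≤ |x| := by
      by_contra! h
      exact hx ⟨(abs_lt.1 h).1, (abs_lt.1 h).2.le⟩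
    have hl : |Real.log x| ≤ |x| := by
      rw [← Real.log_abs, abs_of_nonneg (Real.log_nonneg hx1)]
      exact Real.log_le_self (abs_nonneg x)
    have : 2 * |Real.log x| * Real.exp (-x ^ 2 / 2) * Real.exp (t * x) ≤
        2 * |x| * Real.exp (-x ^ 2 / 2) * Real.exp (t * x) := by gcongr
    simp only [abs_zero, mul_zero, zero_add]
    linarith

/-- The Laplace transform of `logWeight`; up to the factor `√(2π) e^{t²/2}` it is
`E log ((t + Z)²)` for a standard Gaussian `Z`. -/
noncomputable def lap (t : ℝ) : ℝ := ∫ x, logWeight x * Real.exp (t * x)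

/-- The first derivative of `lap`. -/
noncomputable def lap1 (t : ℝ) : ℝ := ∫ x, (x * logWeight x) * Real.exp (t * x)

/-- The second derivative of `lap`. -/
noncomputable def lap2 (t : ℝ) : ℝ := ∫ x, (x * (x * logWeight x)) * Real.exp (t * x)

lemma hasDerivAt_lap (t : ℝ) : HasDerivAt lap (lap1 t) t :=
  (hasDerivAt_laplace measurable_logWeight integrable_logWeight t).2

lemma integrable_lap1 (t : ℝ) : Integrable (fun x => (x * logWeight x) * Real.exp (t * x)) :=
  (hasDerivAt_laplace measurable_logWeight integrable_logWeight t).1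

lemma hasDerivAt_lap1 (t : ℝ) : HasDerivAt lap1 (lap2 t) t :=
  (hasDerivAt_laplace (measurable_id.mul measurable_logWeight) integrable_lap1 t).2

lemma integrable_lap2 (t : ℝ) :
    Integrable (fun x => (x * (x * logWeight x)) * Real.exp (t * x)) :=
  (hasDerivAt_laplace (measurable_id.mul measurable_logWeight) integrable_lap1 t).1

lemma lap1_zero : lap1 0 = 0 := by
  have h := integral_neg_eq_self (fun x : ℝ => (x * logWeight x) * Real.exp (0 * x)) volume
  have h2 : ∫ x : ℝ, (-x * logWeight (-x)) * Real.exp (0 * -x) = - lap1 0 := by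
    rw [lap1, ← integral_neg]
    congr 1; ext x; simp [logWeight]
  have : lap1 0 = - lap1 0 := by rw [← h2, lap1, ← h]
  linarith

/-- Integration by parts: `x log(x²) e^{-x²/2 + tx}` is continuous, differentiable off `0` and
decays at infinity, so its derivative integrates to `0`. -/
lemma laplace_ode (t : ℝ) :
    lap2 t - t * lap1 t - lap t = 2 * (Real.sqrt (2 * Real.pi) * Real.exp (t ^ 2 / 2)) := by
  set F : ℝ → ℝ := fun x => (x * logWeight x) * Real.exp (t * x) with hF
  set F' : ℝ → ℝ := fun x => logWeight x * Real.exp (t * x)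
    + 2 * (Real.exp (-x ^ 2 / 2) * Real.exp (t * x))
    - (x * (x * logWeight x)) * Real.exp (t * x)
    + t * ((x * logWeight x) * Real.exp (t * x)) with hF'
  have i0 := integrable_logWeight t
  have i1 := integrable_lap1 t
  have i2 := integrable_lap2 t
  have ig := (integral_gauss_exp t).1.const_mul 2
  have hFi : Integrable F := i1
  have hF'i : Integrable F' := ((i0.add ig).sub i2).add (i1.const_mul t)
  have hd : ∀ x : ℝ, x ≠ 0 → HasDerivAt F (F' x) x := by
    intro x hx
    have hl : HasDerivAt (fun y : ℝ => Real.log (y ^ 2)) (2 / x) x := by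
      have h := ((hasDerivAt_id x).pow 2).log (pow_ne_zero 2 hx)
      exact h.congr_deriv (by simp only [id, Pi.pow_apply]; field_simp; norm_num; ring)
    have he : HasDerivAt (fun y : ℝ => Real.exp (-y ^ 2 / 2))
        (Real.exp (-x ^ 2 / 2) * (-x)) x := by
      have h := ((((hasDerivAt_id x).pow 2).neg).div_const 2).exp
      exact h.congr_deriv (by simp; ring)
    have ht : HasDerivAt (fun y : ℝ => Real.exp (t * y)) (Real.exp (t * x) * t) x := by
      simpa using ((hasDerivAt_id x).const_mul t).exp
    have h := ((hasDerivAt_id x).mul (hl.mul he)).mul ht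
    refine h.congr_deriv ?_
    simp only [hF', logWeight, id, Pi.mul_apply]
    field_simp
    ring
  have hc : Continuous F := by
    have : F = fun x => 2 * (x * Real.log x) * Real.exp (-x ^ 2 / 2) * Real.exp (t * x) := by
      ext x; simp only [hF, logWeight, Real.log_pow, Nat.cast_ofNat]; ring
    rw [this]
    exact ((Real.continuous_mul_log.const_mul 2).mul (by fun_prop)).mul (by fun_prop)
  have hF0 : F 0 = 0 := by simp [hF]
  have htop : Filter.Tendsto F Filter.atTop (nhds 0) :=
    tendsto_zero_of_hasDerivAt_of_integrableOn_Ioi (a := 0) (fun x hx => hd x (ne_of_gt hx))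
      hF'i.integrableOn hFi.integrableOn
  have hbot : Filter.Tendsto F Filter.atBot (nhds 0) :=
    tendsto_zero_of_hasDerivAt_of_integrableOn_Iic (a := -1)
      (fun x hx => hd x (by have : x ≤ -1 := hx; linarith))
      hF'i.integrableOn hFi.integrableOn
  have hR := integral_Ioi_of_hasDerivAt_of_tendsto (a := 0) hc.continuousWithinAt
    (fun x hx => hd x (ne_of_gt hx)) hF'i.integrableOn htop
  have hL := integral_Iic_of_hasDerivAt_of_tendsto (a := 0) hc.continuousWithinAt
    (fun x hx => hd x (ne_of_lt hx)) hF'i.integrableOn hbot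
  have hsum : ∫ x, F' x = 0 := by
    rw [← intervalIntegral.integral_Iic_add_Ioi (b := 0) hF'i.integrableOn hF'i.integrableOn,
      hR, hL, hF0]
    simp
  have hsplit : ∫ x, F' x = lap t
      + 2 * (Real.sqrt (2 * Real.pi) * Real.exp (t ^ 2 / 2)) - lap2 t + t * lap1 t := by
    rw [← (integral_gauss_exp t).2]
    simp only [hF', lap, lap1, lap2]
    have j1 := integral_add ((i0.add ig).sub i2) (i1.const_mul t)
    have j2 := integral_sub (i0.add ig) i2
    have j3 := integral_add i0 ig
    simp only [Pi.add_apply, Pi.sub_apply, integral_const_mul] at j1 j2 j3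
    rw [j1, j2, j3]
  linarith

/-! ### Minimality at the centred Gaussian -/

/-- `E log ((t + Z)²) - log (1 + t²)` for a standard Gaussian `Z`. -/
noncomputable def gap (t : ℝ) : ℝ :=
  (Real.sqrt (2 * Real.pi))⁻¹ * Real.exp (-t ^ 2 / 2) * lap t - Real.log (1 + t ^ 2)

/-- `e^{t²/2}` times the derivative of `gap`. -/
noncomputable def gapQ (t : ℝ) : ℝ :=
  (Real.sqrt (2 * Real.pi))⁻¹ * (lap1 t - t * lap t)
    - 2 * t / (1 + t ^ 2) * Real.exp (t ^ 2 / 2)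

lemma hasDerivAt_gap (t : ℝ) : HasDerivAt gap (Real.exp (-t ^ 2 / 2) * gapQ t) t := by
  have he : HasDerivAt (fun y : ℝ => Real.exp (-y ^ 2 / 2))
      (Real.exp (-t ^ 2 / 2) * (-t)) t := by
    have h := ((((hasDerivAt_id t).pow 2).neg).div_const 2).exp
    exact h.congr_deriv (by simp; ring)
  have hp : (1 + t ^ 2 : ℝ) ≠ 0 := by positivity
  have hl : HasDerivAt (fun y : ℝ => Real.log (1 + y ^ 2)) (2 * t / (1 + t ^ 2)) t := by
    have h := (((hasDerivAt_id t).pow 2).const_add 1).log hp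
    exact h.congr_deriv (by simp)
  have h := ((he.const_mul (Real.sqrt (2 * Real.pi))⁻¹).mul (hasDerivAt_lap t)).sub hl
  refine h.congr_deriv ?_
  have hee : Real.exp (-t ^ 2 / 2) * Real.exp (t ^ 2 / 2) = 1 := by
    rw [← Real.exp_add]; ring_nf; exact Real.exp_zero
  rw [gapQ]
  linear_combination (2 * t / (1 + t ^ 2)) * hee

lemma hasDerivAt_gapQ (t : ℝ) :
    HasDerivAt gapQ (Real.exp (t ^ 2 / 2) * (2 * t ^ 2 * 2 / (1 + t ^ 2) ^ 2)) t := by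
  have he : HasDerivAt (fun y : ℝ => Real.exp (y ^ 2 / 2)) (Real.exp (t ^ 2 / 2) * t) t := by
    have h := (((hasDerivAt_id t).pow 2).div_const 2).exp
    exact h.congr_deriv (by simp)
  have hp : (1 + t ^ 2 : ℝ) ≠ 0 := by positivity
  have hq : HasDerivAt (fun y : ℝ => 2 * y / (1 + y ^ 2))
      ((2 * (1 + t ^ 2) - 2 * t * (2 * t)) / (1 + t ^ 2) ^ 2) t := by
    have h := ((hasDerivAt_id t).const_mul 2).div (((hasDerivAt_id t).pow 2).const_add 1) hp
    exact h.congr_deriv (by simp)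
  have h := ((((hasDerivAt_lap1 t).sub ((hasDerivAt_id t).mul (hasDerivAt_lap t))).const_mul
    (Real.sqrt (2 * Real.pi))⁻¹)).sub (hq.mul he)
  refine h.congr_deriv ?_
  have hc : Real.sqrt (2 * Real.pi) ≠ 0 := by positivity
  have ode : (Real.sqrt (2 * Real.pi))⁻¹ * (lap2 t - (1 * lap t + id t * lap1 t)) =
      2 * Real.exp (t ^ 2 / 2) := by
    have := laplace_ode t
    have h2 : lap2 t - (1 * lap t + id t * lap1 t) =
        2 * (Real.sqrt (2 * Real.pi) * Real.exp (t ^ 2 / 2)) := by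
      simp only [id]; linarith
    rw [h2]; field_simp
  rw [ode]
  field_simp
  ring

lemma gapQ_zero : gapQ 0 = 0 := by simp [gapQ, lap1_zero]

lemma gapQ_mono : Monotone gapQ :=
  monotone_of_deriv_nonneg (fun t => (hasDerivAt_gapQ t).differentiableAt) fun t => by
    rw [(hasDerivAt_gapQ t).deriv]; positivity

lemma gap_min (t : ℝ) : gap 0 ≤ gap t := by
  have hcont : Continuous gap :=
    continuous_iff_continuousAt.2 fun t => (hasDerivAt_gap t).continuousAt
  have hdiff : Differentiable ℝ gap := fun t => (hasDerivAt_gap t).differentiableAt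
  rcases le_total 0 t with ht | ht
  · refine monotoneOn_of_deriv_nonneg (convex_Ici 0) hcont.continuousOn hdiff.differentiableOn
      (fun x hx => ?_) (Set.mem_Ici.2 le_rfl) ht ht
    rw [interior_Ici] at hx
    rw [(hasDerivAt_gap x).deriv]
    exact mul_nonneg (Real.exp_pos _).le (gapQ_zero ▸ gapQ_mono (le_of_lt hx))
  · refine antitoneOn_of_deriv_nonpos (convex_Iic 0) hcont.continuousOn hdiff.differentiableOn
      (fun x hx => ?_) ht (Set.mem_Iic.2 le_rfl) ht
    rw [interior_Iic] at hx
    rw [(hasDerivAt_gap x).deriv]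
    exact mul_nonpos_of_nonneg_of_nonpos (Real.exp_pos _).le
      (gapQ_zero ▸ gapQ_mono (le_of_lt hx))

lemma gap_zero : gap 0 = -C1 := by
  simp [gap, C1, lap, logWeight]

/-! ### Gaussian expectations and scaling -/

lemma pdf_mul_log (t x : ℝ) : gaussianPDFReal t 1 x * Real.log (x ^ 2) =
    (Real.sqrt (2 * Real.pi))⁻¹ * Real.exp (-t ^ 2 / 2) * (logWeight x * Real.exp (t * x)) := by
  have : Real.exp (-(x - t) ^ 2 / 2) =
      Real.exp (-t ^ 2 / 2) * (Real.exp (-x ^ 2 / 2) * Real.exp (t * x)) := by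
    rw [← Real.exp_add, ← Real.exp_add]; ring_nf
  simp only [gaussianPDFReal, NNReal.coe_one, mul_one, logWeight, this]
  ring

lemma integral_log_gaussian (t : ℝ) : ∫ x, Real.log (x ^ 2) ∂(gaussianReal t 1) =
    (Real.sqrt (2 * Real.pi))⁻¹ * Real.exp (-t ^ 2 / 2) * lap t := by
  rw [integral_gaussianReal_eq_integral_smul one_ne_zero]
  simp only [smul_eq_mul, pdf_mul_log]
  rw [integral_const_mul, lap]

lemma integrable_log_gaussian (t : ℝ) :
    Integrable (fun x => Real.log (x ^ 2)) (gaussianReal t 1) := by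
  rw [gaussianReal_of_var_ne_zero t one_ne_zero,
    integrable_withDensity_iff_integrable_smul' (measurable_gaussianPDF t 1)
      (Filter.Eventually.of_forall fun x => gaussianPDF_lt_top)]
  simp only [toReal_gaussianPDF, smul_eq_mul, pdf_mul_log]
  exact (integrable_logWeight t).const_mul _

lemma integral_sq_gaussian (m : ℝ) (v : NNReal) :
    ∫ x, x ^ 2 ∂(gaussianReal m v) = m ^ 2 + v := by
  have h := variance_eq_sub (μ := gaussianReal m v) (X := id) (memLp_id_gaussianReal 2)
  rw [variance_id_gaussianReal] at h
  simp only [Pi.pow_apply, id, integral_id_gaussianReal] at h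
  linarith

/-- for a (nondegenerate) real Gaussian random variable `X`,
`log E X² - E log X² ≤ C₁`. -/
theorem log_expectation_sq_sub_expectation_log_sq_le
    {Ω : Type*} [MeasurableSpace Ω] (μ : Measure Ω) [IsProbabilityMeasure μ]
    (X : Ω → ℝ) (hX : Measurable X)
    (m : ℝ) (v : NNReal) (hv : v ≠ 0)
    (hlaw : μ.map X = gaussianReal m v) :
    Real.log (∫ ω, (X ω) ^ 2 ∂μ) - ∫ ω, Real.log ((X ω) ^ 2) ∂μ ≤ C1 := by
  have hlogm : Measurable fun x : ℝ => Real.log (x ^ 2) := by fun_prop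
  have e1 : ∫ ω, (X ω) ^ 2 ∂μ = m ^ 2 + v := by
    rw [← integral_sq_gaussian m v, ← hlaw,
      integral_map hX.aemeasurable (by fun_prop)]
  have e2 : ∫ ω, Real.log ((X ω) ^ 2) ∂μ = ∫ x, Real.log (x ^ 2) ∂(gaussianReal m v) := by
    rw [← hlaw, integral_map hX.aemeasurable hlogm.aestronglyMeasurable]
  have hv0 : (0 : ℝ) < v := by positivity
  set s : ℝ := Real.sqrt v with hs
  have hs0 : 0 < s := Real.sqrt_pos.2 hv0
  have hs2 : s ^ 2 = v := Real.sq_sqrt hv0.le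
  set t : ℝ := m / s with ht
  have hmap : gaussianReal m v = (gaussianReal t 1).map (s * ·) := by
    rw [gaussianReal_map_const_mul]
    congr 1
    · rw [ht]; field_simp
    · ext; simp [hs2]
  have hne : ∀ᵐ x ∂(gaussianReal t 1), x ≠ 0 :=
    (gaussianReal_absolutelyContinuous t one_ne_zero).ae_le
      (Measure.ae_ne volume 0)
  have e3 : ∫ x, Real.log (x ^ 2) ∂(gaussianReal m v) =
      Real.log v + ∫ x, Real.log (x ^ 2) ∂(gaussianReal t 1) := by
    rw [hmap, integral_map (by fun_prop) hlogm.aestronglyMeasurable]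
    have : ∫ x, Real.log ((s * x) ^ 2) ∂(gaussianReal t 1) =
        ∫ x, (Real.log v + Real.log (x ^ 2)) ∂(gaussianReal t 1) := by
      refine integral_congr_ae (hne.mono fun x hx => ?_)
      simp only
      rw [mul_pow, hs2, Real.log_mul hv0.ne' (pow_ne_zero 2 hx)]
    rw [this, integral_add (integrable_const _) (integrable_log_gaussian t)]
    simp
  have e4 : Real.log (m ^ 2 + v) = Real.log v + Real.log (1 + t ^ 2) := by
    rw [← Real.log_mul hv0.ne' (by positivity)]
    congr 1
    rw [ht, div_pow, hs2]; field_simp; ring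
  rw [e1, e2, e3, e4, integral_log_gaussian]
  have h := gap_min t
  rw [gap_zero, gap] at h
  linarith
end

section
/- Let X be a real Gaussian random variable with variance σ² > 0 and set C₁ := −(1/√(2π)) ∫_ℝ log(x²) e^{−x²/2} dx. Then log E X² − E log X² = C₁ if and only if E X = 0. -/
/-!
By scaling, the law may be taken to be `N(a, 1)`, and the claim becomes: the function
`H(a) = E log (Z + a)² - log (1 + a²)`, with `Z` standard Gaussian, takes the value `H(0)` only at
`a = 0`. Completing the square, `√(2π) E log (Z + a)² = exp(-a²/2) A(a)` where
`A(a) = ∫ log(x²) exp(-x²/2) exp(a x) dx` (`logLaplace`). This transform is smooth, and integrating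
the derivative of `x log(x²) exp(a x - x²/2)` over `ℝ` gives the differential equation
`A'' = a A' + A + 2 √(2π) exp(a²/2)` (`logLaplace₂_eq`). Hence `B = (A' - a A) / √(2π)` satisfies
`B' = 2 exp(a²/2)` and `B(0) = 0`, while
`H'(a) = exp(-a²/2) (B(a) - 2 a / (1 + a²) exp(a²/2))`.
The function in parentheses vanishes at `0` and its derivative is
`exp(a²/2) · 4 a² / (1 + a²)² > 0` for `a > 0`. So `H` is strictly increasing on `[0, ∞)`,
and it is even.
-/

open MeasureTheory ProbabilityTheory

open Set Filter Topology

/-! ### Laplace transforms of functions with exponential moments -/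

/-- `g` is integrable against every exponential weight `exp (t |x|)`. -/
def ExpIntegrable (g : ℝ → ℝ) : Prop :=
  Measurable g ∧ ∀ t : ℝ, Integrable fun x => g x * Real.exp (t * |x|)

lemma ExpIntegrable.id_mul {g : ℝ → ℝ} (hg : ExpIntegrable g) :
    ExpIntegrable fun x => x * g x := by
  refine ⟨measurable_id.mul hg.1, fun t => ?_⟩
  refine (hg.2 (t + 1)).mono ?_ (ae_of_all _ fun x => ?_)
  · have := hg.1
    exact Measurable.aestronglyMeasurable (by fun_prop)
  · have h1 : |x| ≤ Real.exp |x| := by linarith [Real.add_one_le_exp |x|]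
    have h2 : Real.exp ((t + 1) * |x|) = Real.exp |x| * Real.exp (t * |x|) := by
      rw [← Real.exp_add]; ring_nf
    simp only [norm_mul, Real.norm_eq_abs, Real.abs_exp, h2]
    calc |x| * |g x| * Real.exp (t * |x|) ≤ Real.exp |x| * |g x| * Real.exp (t * |x|) := by gcongr
      _ = _ := by ring

lemma ExpIntegrable.integrable_mul_exp {g : ℝ → ℝ} (hg : ExpIntegrable g) (a : ℝ) :
    Integrable fun x => g x * Real.exp (a * x) := by
  refine (hg.2 |a|).mono ?_ (ae_of_all _ fun x => ?_)
  · have := hg.1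
    exact Measurable.aestronglyMeasurable (by fun_prop)
  · simp only [norm_mul, Real.norm_eq_abs, Real.abs_exp]
    refine mul_le_mul_of_nonneg_left (Real.exp_le_exp.2 ?_) (abs_nonneg _)
    rw [← abs_mul]; exact le_abs_self _

lemma ExpIntegrable.hasDerivAt {g : ℝ → ℝ} (hg : ExpIntegrable g) (a : ℝ) :
    HasDerivAt (fun a => ∫ x, g x * Real.exp (a * x)) (∫ x, x * g x * Real.exp (a * x)) a := by
  have hm := hg.1
  refine (hasDerivAt_integral_of_dominated_loc_of_deriv_le
    (s := Metric.ball a 1) (F := fun a x => g x * Real.exp (a * x))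
    (F' := fun a x => x * g x * Real.exp (a * x))
    (bound := fun x => ‖x * g x * Real.exp ((|a| + 1) * |x|)‖)
    (Metric.ball_mem_nhds a one_pos) (Eventually.of_forall fun b => ?_)
    (hg.integrable_mul_exp a) ?_ (ae_of_all _ fun x b hb => ?_)
    (hg.id_mul.2 _).norm (ae_of_all _ fun x b _ => ?_)).2
  · exact Measurable.aestronglyMeasurable (by fun_prop)
  · exact Measurable.aestronglyMeasurable (by fun_prop)
  · have hb' : |b| ≤ |a| + 1 := by
      have h := abs_sub_abs_le_abs_sub b a
      rw [Metric.mem_ball, Real.dist_eq] at hb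
      linarith
    simp only [norm_mul, Real.norm_eq_abs, Real.abs_exp]
    refine mul_le_mul_of_nonneg_left (Real.exp_le_exp.2 ?_) (by positivity)
    calc b * x ≤ |b| * |x| := by rw [← abs_mul]; exact le_abs_self _
      _ ≤ _ := by gcongr
  · have h := (((hasDerivAt_id b).mul_const x).exp).const_mul (g x)
    convert! h using 1
    simp only [id]; ring

/-! ### Integrability of the logarithm against Gaussian weights -/

/-- The function `log(x²) exp(-x²/2)`. -/
noncomputable def logGauss (x : ℝ) : ℝ := Real.log (x ^ 2) * Real.exp (-x ^ 2 / 2)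

/-- The function `exp(-x²/2)` decays fast enough to absorb `exp (t |x|)`, leaving a Gaussian. -/
lemma exp_gauss_mul_exp_le (t x : ℝ) :
    Real.exp (-x ^ 2 / 2) * Real.exp (t * |x|) ≤
      Real.exp (t ^ 2) * Real.exp (-(1 / 4) * x ^ 2) := by
  rw [← Real.exp_add, ← Real.exp_add, Real.exp_le_exp]
  nlinarith [sq_nonneg (t - |x| / 2), sq_abs x]

lemma expIntegrable_gauss : ExpIntegrable fun x => Real.exp (-x ^ 2 / 2) := by
  refine ⟨by fun_prop, fun t => ?_⟩
  refine ((integrable_exp_neg_mul_sq (b := 1 / 4) (by norm_num)).const_mul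
    (Real.exp (t ^ 2))).mono (Measurable.aestronglyMeasurable (by fun_prop))
    (ae_of_all _ fun x => ?_)
  rw [Real.norm_of_nonneg (by positivity), Real.norm_of_nonneg (by positivity)]
  exact exp_gauss_mul_exp_le t x

lemma abs_log_sq_le (x : ℝ) :
    |Real.log (x ^ 2)| ≤ 2 * |x| + (Ioc (-1 : ℝ) 1).indicator (fun x => 2 * |Real.log x|) x := by
  rw [Real.log_pow]
  push_cast
  rw [abs_mul, abs_two]
  by_cases hx : x ∈ Ioc (-1 : ℝ) 1
  · rw [indicator_of_mem hx]
    linarith [abs_nonneg x]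
  · rw [indicator_of_notMem hx, add_zero]
    have h1 : 1 ≤ |x| := by
      rw [mem_Ioc, not_and_or, not_lt, not_le] at hx
      rw [le_abs]
      rcases hx with h | h
      · right; linarith
      · left; linarith
    rw [← Real.log_abs x, abs_of_nonneg (Real.log_nonneg h1)]
    linarith [Real.log_le_sub_one_of_pos (show 0 < |x| by linarith)]

lemma expIntegrable_logGauss : ExpIntegrable logGauss := by
  have hm : Measurable logGauss := by
    unfold logGauss
    exact (Real.measurable_log.comp (measurable_id.pow_const 2)).mul (by fun_prop)
  refine ⟨hm, fun t => ?_⟩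
  have hlog : Integrable ((Ioc (-1 : ℝ) 1).indicator (fun x => 2 * |Real.log x|)) := by
    rw [integrable_indicator_iff measurableSet_Ioc]
    have h : IntervalIntegrable Real.log volume (-1) 1 := intervalIntegral.intervalIntegrable_log'
    rw [intervalIntegrable_iff_integrableOn_Ioc_of_le (by norm_num)] at h
    exact h.abs.const_mul 2
  have hlin := (integrable_mul_exp_neg_mul_sq (b := 1 / 4) (by norm_num)).abs
  refine (((hlin.const_mul 2).add hlog).const_mul (Real.exp (t ^ 2))).mono
    (Measurable.aestronglyMeasurable (by fun_prop)) (ae_of_all _ fun x => ?_)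
  have hi : 0 ≤ (Ioc (-1 : ℝ) 1).indicator (fun x => 2 * |Real.log x|) x :=
    indicator_nonneg (fun _ _ => by positivity) x
  have he : Real.exp (-(1 / 4) * x ^ 2) ≤ 1 := Real.exp_le_one_iff.2 (by nlinarith [sq_nonneg x])
  simp only [logGauss, norm_mul, Real.norm_eq_abs, Real.abs_exp, Pi.add_apply]
  rw [mul_assoc, abs_mul x, Real.abs_exp,
    abs_of_nonneg (show 0 ≤ 2 * (|x| * Real.exp (-(1 / 4) * x ^ 2)) +
      (Ioc (-1 : ℝ) 1).indicator (fun x => 2 * |Real.log x|) x by positivity)]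
  calc |Real.log (x ^ 2)| * (Real.exp (-x ^ 2 / 2) * Real.exp (t * |x|))
      ≤ (2 * |x| + (Ioc (-1 : ℝ) 1).indicator (fun x => 2 * |Real.log x|) x) *
        (Real.exp (t ^ 2) * Real.exp (-(1 / 4) * x ^ 2)) := by
        exact mul_le_mul (abs_log_sq_le x) (exp_gauss_mul_exp_le t x) (by positivity)
          (by positivity)
    _ = Real.exp (t ^ 2) * (2 * (|x| * Real.exp (-(1 / 4) * x ^ 2)) +
        (Ioc (-1 : ℝ) 1).indicator (fun x => 2 * |Real.log x|) x *
          Real.exp (-(1 / 4) * x ^ 2)) := by ring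
    _ ≤ _ := by
        gcongr
        exact mul_le_of_le_one_right hi he

/-! ### The transform of the logarithm and its differential equation -/

/-- The two-sided Laplace transform `A(a) = ∫ log(x²) exp(-x²/2) exp(a x) dx`. -/
noncomputable def logLaplace (a : ℝ) : ℝ := ∫ x, logGauss x * Real.exp (a * x)

/-- The first derivative of `logLaplace`. -/
noncomputable def logLaplace₁ (a : ℝ) : ℝ := ∫ x, x * logGauss x * Real.exp (a * x)

/-- The second derivative of `logLaplace`. -/
noncomputable def logLaplace₂ (a : ℝ) : ℝ := ∫ x, x * (x * logGauss x) * Real.exp (a * x)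

lemma hasDerivAt_logLaplace (a : ℝ) : HasDerivAt logLaplace (logLaplace₁ a) a :=
  expIntegrable_logGauss.hasDerivAt a

lemma hasDerivAt_logLaplace₁ (a : ℝ) : HasDerivAt logLaplace₁ (logLaplace₂ a) a :=
  expIntegrable_logGauss.id_mul.hasDerivAt a

lemma logLaplace_neg (a : ℝ) : logLaplace (-a) = logLaplace a := by
  unfold logLaplace
  rw [← integral_neg_eq_self]
  simp [logGauss]

lemma logLaplace₁_zero : logLaplace₁ 0 = 0 := by
  have h : logLaplace₁ 0 = -logLaplace₁ 0 := by
    unfold logLaplace₁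
    conv_lhs => rw [← integral_neg_eq_self]
    simp [logGauss, integral_neg]
  linarith

lemma integral_gauss_mul_exp (a : ℝ) :
    ∫ x, Real.exp (-x ^ 2 / 2) * Real.exp (a * x) =
      Real.sqrt (2 * Real.pi) * Real.exp (a ^ 2 / 2) := by
  have h := integral_gaussianPDFReal_eq_one a (v := 1) one_ne_zero
  have hc : Real.sqrt (2 * Real.pi) ≠ 0 := by positivity
  have h2 : ∀ x, Real.exp (-x ^ 2 / 2) * Real.exp (a * x) =
      Real.sqrt (2 * Real.pi) * Real.exp (a ^ 2 / 2) * gaussianPDFReal a 1 x := by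
    intro x
    simp only [gaussianPDFReal, NNReal.coe_one, mul_one]
    field_simp
    rw [← Real.exp_add, ← Real.exp_add]
    ring_nf
  simp_rw [h2]
  rw [integral_const_mul, h, mul_one]

/-- The function `x log(x²)` is continuous, including at `0`. -/
lemma continuous_mul_log_sq : Continuous fun x : ℝ => x * Real.log (x ^ 2) := by
  have h : (fun x : ℝ => x * Real.log (x ^ 2)) = fun x => 2 * (x * Real.log x) := by
    ext x; rw [Real.log_pow]; push_cast; ring
  rw [h]
  exact Real.continuous_mul_log.const_mul 2

/-- The differential equation `A'' = a A' + A + 2 √(2π) exp(a²/2)`. -/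
lemma logLaplace₂_eq (a : ℝ) :
    logLaplace₂ a = a * logLaplace₁ a + logLaplace a +
      2 * (Real.sqrt (2 * Real.pi) * Real.exp (a ^ 2 / 2)) := by
  have i0 := expIntegrable_logGauss.integrable_mul_exp a
  have i1 := expIntegrable_logGauss.id_mul.integrable_mul_exp a
  have i2 := expIntegrable_logGauss.id_mul.id_mul.integrable_mul_exp a
  have ig := expIntegrable_gauss.integrable_mul_exp a
  have j1 : Integrable fun x => a * (x * logGauss x * Real.exp (a * x)) +
      logGauss x * Real.exp (a * x) := (i1.const_mul a).add i0
  have j2 : Integrable fun x => a * (x * logGauss x * Real.exp (a * x)) +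
      logGauss x * Real.exp (a * x) + 2 * (Real.exp (-x ^ 2 / 2) * Real.exp (a * x)) :=
    j1.add (ig.const_mul 2)
  let f : ℝ → ℝ := fun x => x * logGauss x * Real.exp (a * x)
  have hf : f = fun x => x * logGauss x * Real.exp (a * x) := rfl
  set f' : ℝ → ℝ := fun x => a * (x * logGauss x * Real.exp (a * x)) +
    logGauss x * Real.exp (a * x) + 2 * (Real.exp (-x ^ 2 / 2) * Real.exp (a * x)) -
    x * (x * logGauss x) * Real.exp (a * x) with hf'
  have if' : Integrable f' := j2.sub i2
  have hint : ∫ x, f' x = a * logLaplace₁ a + logLaplace a +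
      2 * (Real.sqrt (2 * Real.pi) * Real.exp (a ^ 2 / 2)) - logLaplace₂ a := by
    simp only [hf']
    rw [integral_sub j2 i2, integral_add j1 (ig.const_mul 2),
      integral_add (i1.const_mul a) i0, integral_const_mul, integral_const_mul,
      integral_gauss_mul_exp]
    rfl
  have hcont : Continuous f := by
    have h : f = fun x => (x * Real.log (x ^ 2)) * (Real.exp (-x ^ 2 / 2) * Real.exp (a * x)) := by
      ext x; simp only [hf, logGauss]; ring
    rw [h]
    exact continuous_mul_log_sq.mul (by fun_prop)
  have hder : ∀ x : ℝ, x ≠ 0 → HasDerivAt f (f' x) x := by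
    intro x hx
    have h1 : HasDerivAt (fun x : ℝ => Real.log (x ^ 2)) (2 * x / x ^ 2) x := by
      have := (hasDerivAt_pow 2 x).log (pow_ne_zero 2 hx)
      simpa using this
    have h2 : HasDerivAt (fun x : ℝ => Real.exp (-x ^ 2 / 2)) (Real.exp (-x ^ 2 / 2) * (-x)) x := by
      have := (((hasDerivAt_pow 2 x).neg).div_const 2).exp
      convert! this using 1
      simp
      ring
    have h3 : HasDerivAt (fun x : ℝ => Real.exp (a * x)) (Real.exp (a * x) * a) x := by
      have := ((hasDerivAt_id x).const_mul a).exp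
      simpa using this
    have h := ((hasDerivAt_id x).mul (h1.mul h2)).mul h3
    convert! h using 1
    simp only [hf', logGauss, id, Pi.mul_apply]
    field_simp
    ring
  have ht : Tendsto f atTop (𝓝 0) := tendsto_zero_of_hasDerivAt_of_integrableOn_Ioi (a := 0)
    (fun x hx => hder x (ne_of_gt hx)) if'.integrableOn i1.integrableOn
  have hb : Tendsto f atBot (𝓝 0) := tendsto_zero_of_hasDerivAt_of_integrableOn_Iic (a := -1)
    (fun x hx => hder x (by have : x ≤ -1 := hx; linarith)) if'.integrableOn i1.integrableOn
  have e1 := integral_Ioi_of_hasDerivAt_of_tendsto (a := 0) hcont.continuousWithinAt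
    (fun x hx => hder x (ne_of_gt hx)) if'.integrableOn ht
  have e2 := integral_Iic_of_hasDerivAt_of_tendsto (a := 0) hcont.continuousWithinAt
    (fun x hx => hder x (ne_of_lt hx)) if'.integrableOn hb
  have e3 := intervalIntegral.integral_Iic_add_Ioi (b := (0 : ℝ)) (μ := volume)
    if'.integrableOn if'.integrableOn
  linarith

/-! ### Strict monotonicity of the gap -/

/-- The function `H(a) = E log (Z + a)² - log (1 + a²)`, in terms of `logLaplace`. -/
noncomputable def logGap (a : ℝ) : ℝ :=
  (Real.sqrt (2 * Real.pi))⁻¹ * (Real.exp (-a ^ 2 / 2) * logLaplace a) - Real.log (1 + a ^ 2)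

/-- The function `exp(a²/2) H'(a)`. -/
noncomputable def logGapSlope (a : ℝ) : ℝ :=
  (Real.sqrt (2 * Real.pi))⁻¹ * (logLaplace₁ a - a * logLaplace a) -
    2 * a / (1 + a ^ 2) * Real.exp (a ^ 2 / 2)

lemma hasDerivAt_logGap (a : ℝ) :
    HasDerivAt logGap (Real.exp (-a ^ 2 / 2) * logGapSlope a) a := by
  have hp : 1 + a ^ 2 ≠ 0 := by positivity
  have h1 : HasDerivAt (fun x : ℝ => Real.exp (-x ^ 2 / 2)) (Real.exp (-a ^ 2 / 2) * (-a)) a := by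
    have := (((hasDerivAt_pow 2 a).neg).div_const 2).exp
    convert! this using 1
    simp
    ring
  have h2 : HasDerivAt (fun x : ℝ => Real.log (1 + x ^ 2)) (2 * a / (1 + a ^ 2)) a := by
    have := ((hasDerivAt_pow 2 a).const_add 1).log hp
    simpa using this
  have h := ((h1.mul (hasDerivAt_logLaplace a)).const_mul (Real.sqrt (2 * Real.pi))⁻¹).sub h2
  have he : Real.exp (-a ^ 2 / 2) * Real.exp (a ^ 2 / 2) = 1 := by
    rw [← Real.exp_add, ← Real.exp_zero]; ring_nf
  convert! h using 1
  unfold logGapSlope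
  linear_combination (-(2 * a / (1 + a ^ 2))) * he

lemma hasDerivAt_logGapSlope (a : ℝ) :
    HasDerivAt logGapSlope (Real.exp (a ^ 2 / 2) * (4 * a ^ 2 / (1 + a ^ 2) ^ 2)) a := by
  have hp : 1 + a ^ 2 ≠ 0 := by positivity
  have hc : Real.sqrt (2 * Real.pi) ≠ 0 := by positivity
  have h1 : HasDerivAt (fun x : ℝ => Real.exp (x ^ 2 / 2)) (Real.exp (a ^ 2 / 2) * a) a := by
    have := ((hasDerivAt_pow 2 a).div_const 2).exp
    convert! this using 1
    simp
  have h2 : HasDerivAt (fun x : ℝ => 2 * x / (1 + x ^ 2))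
      ((2 * (1 + a ^ 2) - 2 * a * (2 * a)) / (1 + a ^ 2) ^ 2) a := by
    have := ((hasDerivAt_id a).const_mul 2).div ((hasDerivAt_pow 2 a).const_add 1) hp
    convert! this using 1
    simp
  have h := (((hasDerivAt_logLaplace₁ a).sub
    ((hasDerivAt_id a).mul (hasDerivAt_logLaplace a))).const_mul
      (Real.sqrt (2 * Real.pi))⁻¹).sub (h2.mul h1)
  convert! h using 1
  rw [logLaplace₂_eq]
  simp only [id]
  field_simp
  ring

lemma logGapSlope_pos {a : ℝ} (ha : 0 < a) : 0 < logGapSlope a := by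
  have h0 : logGapSlope 0 = 0 := by simp [logGapSlope, logLaplace₁_zero]
  rw [← h0]
  refine strictMonoOn_of_deriv_pos (convex_Ici 0)
    (fun x _ => (hasDerivAt_logGapSlope x).continuousAt.continuousWithinAt) (fun x hx => ?_)
    self_mem_Ici ha.le ha
  rw [interior_Ici, mem_Ioi] at hx
  rw [(hasDerivAt_logGapSlope x).deriv]
  positivity

lemma logGap_eq_logGap_zero_iff (a : ℝ) : logGap a = logGap 0 ↔ a = 0 := by
  have hpos : ∀ b : ℝ, 0 < b → logGap 0 < logGap b := by
    intro b hb
    refine strictMonoOn_of_deriv_pos (convex_Ici 0)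
      (fun x _ => (hasDerivAt_logGap x).continuousAt.continuousWithinAt) (fun x hx => ?_)
      self_mem_Ici hb.le hb
    rw [interior_Ici, mem_Ioi] at hx
    rw [(hasDerivAt_logGap x).deriv]
    exact mul_pos (Real.exp_pos _) (logGapSlope_pos hx)
  refine ⟨fun h => ?_, fun h => by rw [h]⟩
  rcases lt_trichotomy a 0 with ha | ha | ha
  · have heven : logGap (-a) = logGap a := by simp [logGap, logLaplace_neg]
    have := hpos (-a) (by linarith)
    linarith
  · exact ha
  · exact absurd h (hpos a ha).ne'

/-! ### Gaussian expectations -/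

lemma C1_eq : C1 = -logGap 0 := by
  simp [C1, logGap, logLaplace, logGauss]

lemma gaussianPDFReal_mul_log_sq (a x : ℝ) :
    gaussianPDFReal a 1 x * Real.log (x ^ 2) =
      (Real.sqrt (2 * Real.pi))⁻¹ *
        (Real.exp (-a ^ 2 / 2) * (logGauss x * Real.exp (a * x))) := by
  have h : Real.exp (-(x - a) ^ 2 / 2) =
      Real.exp (-a ^ 2 / 2) * (Real.exp (-x ^ 2 / 2) * Real.exp (a * x)) := by
    rw [← Real.exp_add, ← Real.exp_add]; ring_nf
  simp only [gaussianPDFReal, NNReal.coe_one, mul_one, logGauss, h]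
  ring

lemma integral_log_sq_gaussianReal_one (a : ℝ) :
    ∫ x, Real.log (x ^ 2) ∂gaussianReal a 1 = logGap a + Real.log (1 + a ^ 2) := by
  rw [integral_gaussianReal_eq_integral_smul one_ne_zero]
  simp only [smul_eq_mul, gaussianPDFReal_mul_log_sq]
  rw [integral_const_mul, integral_const_mul, logGap, logLaplace]
  ring

lemma integrable_log_sq_gaussianReal_one (a : ℝ) :
    Integrable (fun x => Real.log (x ^ 2)) (gaussianReal a 1) := by
  rw [gaussianReal_of_var_ne_zero _ one_ne_zero,
    integrable_withDensity_iff_integrable_smul' (measurable_gaussianPDF _ _)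
      (ae_of_all _ fun _ => gaussianPDF_lt_top)]
  simp only [toReal_gaussianPDF, smul_eq_mul, gaussianPDFReal_mul_log_sq]
  exact ((expIntegrable_logGauss.integrable_mul_exp a).const_mul _).const_mul _

lemma integral_log_sq_gaussianReal (m : ℝ) {v : NNReal} (hv : v ≠ 0) :
    ∫ x, Real.log (x ^ 2) ∂gaussianReal m v =
      Real.log v + ∫ x, Real.log (x ^ 2) ∂gaussianReal (m / Real.sqrt v) 1 := by
  have hv' : (0 : ℝ) < v := by positivity
  have hs : Real.sqrt v ≠ 0 := by positivity
  have hmap : (gaussianReal (m / Real.sqrt v) 1).map (Real.sqrt v * ·) = gaussianReal m v := by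
    rw [gaussianReal_map_const_mul]
    congr 1
    · field_simp
    · ext
      simp [Real.sq_sqrt hv'.le]
  have hmeas : Measurable fun x : ℝ => Real.log (x ^ 2) :=
    Real.measurable_log.comp (measurable_id.pow_const 2)
  rw [← hmap, integral_map (by fun_prop) hmeas.aestronglyMeasurable]
  have : NullSingletonClass (gaussianReal (m / Real.sqrt v) 1) :=
    nullSingletonClass_gaussianReal one_ne_zero
  have hae : ∀ᵐ x ∂gaussianReal (m / Real.sqrt v) 1,
      Real.log ((Real.sqrt v * x) ^ 2) = Real.log v + Real.log (x ^ 2) := by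
    have hne : ∀ᵐ x ∂gaussianReal (m / Real.sqrt v) 1, x ≠ 0 := by
      simp [ae_iff]
    filter_upwards [hne] with x hx
    rw [mul_pow, Real.sq_sqrt hv'.le, Real.log_mul hv'.ne' (pow_ne_zero 2 hx)]
  rw [integral_congr_ae hae, integral_add (integrable_const _)
    (integrable_log_sq_gaussianReal_one _)]
  simp

lemma integral_sq_gaussianReal_s12 (m : ℝ) (v : NNReal) :
    ∫ x, x ^ 2 ∂gaussianReal m v = v + m ^ 2 := by
  have h := variance_eq_sub (memLp_id_gaussianReal (μ := m) (v := v) 2)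
  rw [variance_id_gaussianReal] at h
  simp only [Pi.pow_apply, id, integral_id_gaussianReal] at h
  linarith

/-- for a real Gaussian random variable `X` with positive variance,
`log E X² - E log X² = C₁` if and only if `E X = 0`. -/
theorem log_expectation_sq_sub_expectation_log_sq_eq_iff
    {Ω : Type*} [MeasurableSpace Ω] (μ : Measure Ω) [IsProbabilityMeasure μ]
    (X : Ω → ℝ) (hX : Measurable X)
    (m : ℝ) (v : NNReal) (hv : v ≠ 0)
    (hlaw : μ.map X = gaussianReal m v) :
    Real.log (∫ ω, (X ω) ^ 2 ∂μ) - ∫ ω, Real.log ((X ω) ^ 2) ∂μ = C1 ↔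
      ∫ ω, X ω ∂μ = 0 := by
  have hv' : (0 : ℝ) < v := by positivity
  have hs : Real.sqrt v ≠ 0 := by positivity
  have hmeas : Measurable fun x : ℝ => Real.log (x ^ 2) :=
    Real.measurable_log.comp (measurable_id.pow_const 2)
  have e1 : ∫ ω, X ω ∂μ = m := by
    rw [← integral_id_gaussianReal (μ := m) (v := v), ← hlaw,
      integral_map hX.aemeasurable (by fun_prop)]
  have e2 : ∫ ω, (X ω) ^ 2 ∂μ = v + m ^ 2 := by
    rw [← integral_sq_gaussianReal_s12, ← hlaw, integral_map hX.aemeasurable (by fun_prop)]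
  have e3 : ∫ ω, Real.log ((X ω) ^ 2) ∂μ = ∫ x, Real.log (x ^ 2) ∂gaussianReal m v := by
    rw [← hlaw, integral_map hX.aemeasurable hmeas.aestronglyMeasurable]
  have hlog : Real.log (v + m ^ 2) = Real.log v + Real.log (1 + (m / Real.sqrt v) ^ 2) := by
    rw [← Real.log_mul hv'.ne' (by positivity), div_pow, Real.sq_sqrt hv'.le]
    congr 1
    field_simp
  have hm : m = 0 ↔ m / Real.sqrt v = 0 := by simp [div_eq_zero_iff, hs]
  rw [e1, e2, e3, integral_log_sq_gaussianReal m hv, integral_log_sq_gaussianReal_one, hlog,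
    C1_eq, hm, ← logGap_eq_logGap_zero_iff]
  constructor <;> intro h <;> linarith
end

section
/- Define g : [0,∞) → ℝ by g(a) := log(1 + a²) − (1/√(2π)) ∫_ℝ log((x + a)²) e^{−x²/2} dx. Then g is decreasing on [0,∞), g(0) = C₁ := −(1/√(2π)) ∫_ℝ log(x²) e^{−x²/2} dx, and lim_{a→∞} g(a) = 0. -/
/-!
Write `h(a) = E log (Y + a)²` for a standard Gaussian `Y`, so that `g(a) = log (1 + a²) - h(a)`.

**Monotonicity.** Moving the shift onto the Gaussian density gives
`h(a) = 2 (2π)^{-1/2} e^{-a²/2} M₀(a)`, where `M_k(a) = ∫ log|y| y^k e^{ay - y²/2} dy` satisfies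
`M_k' = M_{k+1}` (`gapM_hasDerivAt`). Integrating the derivative of `y log|y| e^{ay - y²/2}`
yields `M₂ - a M₁ - M₀ = √(2π) e^{a²/2}` (`gapM_recurrence`), which says `h'' + a h' = 2`.
Hence `u(a) = -e^{a²/2} g'(a) = e^{a²/2} (h'(a) - 2a / (1 + a²))` has derivative
`u'(a) = e^{a²/2} · 4a² / (1 + a²)²`, and `u(0) = 0` because `M₁(0)` is the integral of an odd
function. So `u > 0` and `g' < 0` on `(0, ∞)`.

**Limit.** Split `log|x + a| = log⁺|x + a| - log⁺(1 / |x + a|)`. The first part minus `log a` is at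
most `|x|` in absolute value for `a ≥ 1` and tends to `0` pointwise. The second part, in the
variable `y = x + a`, is a fixed integrable function of `y` times a Gaussian factor that is at most
`1` and tends to `0`. Dominated convergence applies to both (`gap_tendsto_far`,
`gap_tendsto_near`), and `log (1 + a²) - 2 log a → 0`.
-/

open Filter

/-- `g(a) = log(1 + a²) - (1/√(2π)) ∫ log((x+a)²) e^{-x²/2} dx`, i.e.
`g(a) = log E (Y+a)² - E log (Y+a)²` for a standard Gaussian `Y`. -/
noncomputable def gGap (a : ℝ) : ℝ :=
  Real.log (1 + a ^ 2) -
    (Real.sqrt (2 * Real.pi))⁻¹ * ∫ x : ℝ, Real.log ((x + a) ^ 2) * Real.exp (-x ^ 2 / 2)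

open MeasureTheory Set Topology

/-! ### Integrability against Gaussian weights -/

lemma gap_integrable_posLog_inv : Integrable (fun y : ℝ => Real.posLog y⁻¹) := by
  have h : IntegrableOn (fun y : ℝ => Real.posLog y⁻¹) (Icc (-1) 1) := by
    have h1 : IntegrableOn Real.log (Icc (-1) 1) := by
      rw [integrableOn_Icc_iff_integrableOn_Ioc,
        ← intervalIntegrable_iff_integrableOn_Ioc_of_le (by norm_num)]
      exact intervalIntegral.intervalIntegrable_log'
    refine Integrable.mono h1.norm ?_ (ae_of_all _ fun y => ?_)
    · exact (Real.continuous_posLog.measurable.comp measurable_inv).aestronglyMeasurable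
    · rw [norm_norm, Real.norm_of_nonneg Real.posLog_nonneg, Real.posLog_apply, Real.log_inv,
        Real.norm_eq_abs]
      exact max_le (abs_nonneg _) (neg_le_abs _)
  refine (integrableOn_iff_integrable_of_support_subset ?_).1 h
  intro y hy
  by_contra hc
  apply hy
  show Real.posLog y⁻¹ = 0
  rw [Real.posLog_eq_zero_iff, abs_inv]
  apply inv_le_one_of_one_le₀
  by_contra h2
  exact hc (abs_le.1 (not_le.1 h2).le)

lemma gap_posLog_le_abs (y : ℝ) : Real.posLog y ≤ |y| := by
  rw [← Real.posLog_abs, Real.posLog_apply]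
  exact max_le (abs_nonneg _) (Real.log_le_self (abs_nonneg _))

lemma gap_integrable_abs_mul_gauss {b : ℝ} (hb : 0 < b) :
    Integrable (fun y : ℝ => |y| * Real.exp (-b * y ^ 2)) := by
  refine (integrable_mul_exp_neg_mul_sq hb).norm.congr (ae_of_all _ fun y => ?_)
  simp

lemma gap_integrable_abs_mul_gauss_half :
    Integrable (fun y : ℝ => |y| * Real.exp (-y ^ 2 / 2)) := by
  refine (gap_integrable_abs_mul_gauss (b := 1 / 2) (by norm_num)).congr (ae_of_all _ fun y => ?_)
  ring_nf

lemma gap_integrable_log_mul_gauss :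
    Integrable (fun y : ℝ => |Real.log y| * Real.exp (-(1 / 4) * y ^ 2)) := by
  refine Integrable.mono'
    ((gap_integrable_abs_mul_gauss (b := 1 / 4) (by norm_num)).add gap_integrable_posLog_inv)
    ?_ (ae_of_all _ fun y => ?_)
  · exact (Measurable.mul (by fun_prop) (by fun_prop)).aestronglyMeasurable
  · have h1 : |Real.log y| ≤ Real.posLog y + Real.posLog y⁻¹ := by
      rw [← Real.posLog_sub_posLog_inv]
      have := @Real.posLog_nonneg y
      have := @Real.posLog_nonneg y⁻¹
      rw [abs_le]; constructor <;> linarith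
    have h2 : Real.exp (-(1 / 4) * y ^ 2) ≤ 1 := by
      rw [Real.exp_le_one_iff]; nlinarith [sq_nonneg y]
    have h3 := Real.exp_pos (-(1 / 4) * y ^ 2)
    have h4 := gap_posLog_le_abs y
    have := @Real.posLog_nonneg y⁻¹
    rw [Real.norm_of_nonneg (by positivity)]
    show _ ≤ |y| * Real.exp (-(1 / 4) * y ^ 2) + Real.posLog y⁻¹
    calc _ ≤ (|y| + Real.posLog y⁻¹) * Real.exp (-(1 / 4) * y ^ 2) := by gcongr; linarith
      _ ≤ _ := by nlinarith

/-- Polynomial and exponential factors cost only half of the Gaussian decay, uniformly for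
`|a| ≤ c`. -/
lemma gap_weight_bound (k : ℕ) {a c : ℝ} (hac : |a| ≤ c) (y : ℝ) :
    |y ^ k * Real.exp (a * y - y ^ 2 / 2)| ≤
      (k.factorial * Real.exp ((c + 1) ^ 2)) * Real.exp (-(1 / 4) * y ^ 2) := by
  rw [abs_mul, abs_pow, Real.abs_exp]
  have h1 : |y| ^ k ≤ k.factorial * Real.exp |y| := by
    have := Real.pow_div_factorial_le_exp |y| (abs_nonneg y) k
    rwa [div_le_iff₀' (by positivity)] at this
  have h2 : a * y ≤ c * |y| := by
    calc a * y ≤ |a * y| := le_abs_self _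
      _ = |a| * |y| := abs_mul _ _
      _ ≤ _ := by gcongr
  calc |y| ^ k * Real.exp (a * y - y ^ 2 / 2)
      ≤ (k.factorial * Real.exp |y|) * Real.exp (a * y - y ^ 2 / 2) := by gcongr
    _ = k.factorial * Real.exp (|y| + (a * y - y ^ 2 / 2)) := by rw [Real.exp_add]; ring
    _ ≤ k.factorial * Real.exp ((c + 1) ^ 2 + -(1 / 4) * y ^ 2) := by
        refine mul_le_mul_of_nonneg_left (Real.exp_le_exp.2 ?_) (by positivity)
        nlinarith [sq_nonneg (|y| / 2 - (c + 1)), sq_abs y]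
    _ = _ := by rw [Real.exp_add]; ring

/-! ### The logarithmic moments -/

/-- The integrand of `gapM`. -/
noncomputable def gapW (k : ℕ) (a y : ℝ) : ℝ :=
  Real.log y * (y ^ k * Real.exp (a * y - y ^ 2 / 2))

/-- The moments `M_k(a) = ∫ log|y| y^k e^{ay - y²/2} dy`; `Real.log y` is `log|y|`. -/
noncomputable def gapM (k : ℕ) (a : ℝ) : ℝ := ∫ y : ℝ, gapW k a y

lemma gapW_measurable (k : ℕ) (a : ℝ) : AEStronglyMeasurable (gapW k a) := by
  unfold gapW
  exact (Measurable.mul (by fun_prop) (by fun_prop)).aestronglyMeasurable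

lemma gapW_bound (k : ℕ) {a c : ℝ} (hac : |a| ≤ c) (y : ℝ) :
    ‖gapW k a y‖ ≤ (k.factorial * Real.exp ((c + 1) ^ 2)) *
      (|Real.log y| * Real.exp (-(1 / 4) * y ^ 2)) := by
  rw [gapW, Real.norm_eq_abs, abs_mul]
  calc _ ≤ |Real.log y| * ((k.factorial * Real.exp ((c + 1) ^ 2)) *
        Real.exp (-(1 / 4) * y ^ 2)) := by gcongr; exact gap_weight_bound k hac y
    _ = _ := by ring

lemma gapW_integrable (k : ℕ) (a : ℝ) : Integrable (gapW k a) :=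
  Integrable.mono' (gap_integrable_log_mul_gauss.const_mul _) (gapW_measurable k a)
    (ae_of_all _ fun y => gapW_bound k le_rfl y)

lemma gapM_hasDerivAt (k : ℕ) (a : ℝ) : HasDerivAt (gapM k) (gapM (k + 1) a) a := by
  refine (hasDerivAt_integral_of_dominated_loc_of_deriv_le (F := gapW k) (F' := gapW (k + 1))
    (s := Metric.ball a 1) (Metric.ball_mem_nhds a one_pos)
    (Eventually.of_forall fun b => gapW_measurable k b) (gapW_integrable k a)
    (gapW_measurable (k + 1) a) (ae_of_all _ fun y b hb => gapW_bound (k + 1) (c := |a| + 1) ?_ y)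
    (gap_integrable_log_mul_gauss.const_mul _) (ae_of_all _ fun y b _ => ?_)).2
  · rw [Metric.mem_ball, Real.dist_eq] at hb
    have := abs_sub_abs_le_abs_sub b a
    linarith
  · have h : HasDerivAt (fun b : ℝ => b * y - y ^ 2 / 2) y b := by
      simpa using ((hasDerivAt_id b).mul_const y).sub_const (y ^ 2 / 2)
    have h' := (h.exp.const_mul (y ^ k)).const_mul (Real.log y)
    unfold gapW
    exact h'.congr_deriv (by ring)

lemma gapM_one_zero : gapM 1 0 = 0 := by
  have h : ∫ y : ℝ, gapW 1 0 (-y) = gapM 1 0 := integral_neg_eq_self _ _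
  have h2 : ∀ y, gapW 1 0 (-y) = - gapW 1 0 y := by intro y; simp [gapW]
  simp_rw [h2, integral_neg] at h
  change - gapM 1 0 = _ at h
  linarith

lemma gap_integral_gauss : ∫ y : ℝ, Real.exp (-y ^ 2 / 2) = √(2 * Real.pi) := by
  have := integral_gaussian (1 / 2)
  rw [show Real.pi / (1 / 2) = 2 * Real.pi by ring] at this
  rw [← this]
  congr with y
  ring_nf

lemma gap_integrable_gauss : Integrable (fun y : ℝ => Real.exp (-y ^ 2 / 2)) := by
  refine (integrable_exp_neg_mul_sq (b := 1 / 2) (by norm_num)).congr (ae_of_all _ fun y => ?_)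
  ring_nf

lemma gap_tilt (a y : ℝ) :
    Real.exp (a * y - y ^ 2 / 2) = Real.exp (a ^ 2 / 2) * Real.exp (-(y - a) ^ 2 / 2) := by
  rw [← Real.exp_add]; ring_nf

lemma gap_integrable_tilt (a : ℝ) : Integrable (fun y : ℝ => Real.exp (a * y - y ^ 2 / 2)) := by
  simp_rw [gap_tilt]
  exact (gap_integrable_gauss.comp_sub_right a).const_mul _

lemma gap_integral_tilt (a : ℝ) :
    ∫ y : ℝ, Real.exp (a * y - y ^ 2 / 2) = √(2 * Real.pi) * Real.exp (a ^ 2 / 2) := by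
  simp_rw [gap_tilt, integral_const_mul]
  rw [integral_sub_right_eq_self (fun y : ℝ => Real.exp (-y ^ 2 / 2)), gap_integral_gauss]
  ring

/-- Integration by parts: the integral over `ℝ` of the derivative of
`y log|y| e^{ay - y²/2}` vanishes. This function is continuous at `0` but not differentiable
there, so the two half-lines are treated separately. -/
lemma gapM_recurrence (a : ℝ) :
    gapM 2 a - a * gapM 1 a - gapM 0 a = √(2 * Real.pi) * Real.exp (a ^ 2 / 2) := by
  set f' : ℝ → ℝ := fun y =>
    gapW 0 a y + Real.exp (a * y - y ^ 2 / 2) + a * gapW 1 a y - gapW 2 a y with hf'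
  have hint : Integrable f' :=
    (((gapW_integrable 0 a).add (gap_integrable_tilt a)).add
      ((gapW_integrable 1 a).const_mul a)).sub (gapW_integrable 2 a)
  have hder : ∀ y : ℝ, y ≠ 0 → HasDerivAt (gapW 1 a) (f' y) y := by
    intro y hy
    have h : HasDerivAt (fun y : ℝ => a * y - y ^ 2 / 2) (a - y) y := by
      have := ((hasDerivAt_id y).const_mul a).sub ((hasDerivAt_pow 2 y).div_const 2)
      exact this.congr_deriv (by simp)
    have h' := (Real.hasDerivAt_log hy).mul ((hasDerivAt_pow 1 y).mul h.exp)
    refine h'.congr_deriv ?_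
    simp only [hf', gapW, Pi.mul_apply]
    field_simp
    ring
  have hcont : Continuous (gapW 1 a) := by
    have : gapW 1 a = fun y => (y * Real.log y) * Real.exp (a * y - y ^ 2 / 2) := by
      funext y; simp only [gapW]; ring
    rw [this]
    exact Real.continuous_mul_log.mul (by fun_prop)
  have htop : Tendsto (gapW 1 a) atTop (𝓝 0) :=
    tendsto_zero_of_hasDerivAt_of_integrableOn_Ioi (a := 0) (fun y hy => hder y (ne_of_gt hy))
      hint.integrableOn (gapW_integrable 1 a).integrableOn
  have hbot : Tendsto (gapW 1 a) atBot (𝓝 0) :=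
    tendsto_zero_of_hasDerivAt_of_integrableOn_Iic (a := -1)
      (fun y hy => hder y (ne_of_lt (lt_of_le_of_lt hy (by norm_num))))
      hint.integrableOn (gapW_integrable 1 a).integrableOn
  have h1 := integral_Ioi_of_hasDerivAt_of_tendsto (a := 0) hcont.continuousWithinAt
    (fun y hy => hder y (ne_of_gt hy)) hint.integrableOn htop
  have h2 := integral_Iic_of_hasDerivAt_of_tendsto (a := 0) hcont.continuousWithinAt
    (fun y hy => hder y (ne_of_lt hy)) hint.integrableOn hbot
  have h3 : ∫ y, f' y = 0 := by
    rw [← intervalIntegral.integral_Iic_add_Ioi (b := 0) hint.integrableOn hint.integrableOn,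
      h1, h2]
    ring
  have h4 : ∫ y, f' y = gapM 0 a + √(2 * Real.pi) * Real.exp (a ^ 2 / 2)
      + a * gapM 1 a - gapM 2 a := by
    rw [← gap_integral_tilt, hf', integral_sub, integral_add, integral_add, integral_const_mul]
    · rfl
    · exact gapW_integrable 0 a
    · exact gap_integrable_tilt a
    · exact (gapW_integrable 0 a).add (gap_integrable_tilt a)
    · exact (gapW_integrable 1 a).const_mul a
    · exact ((gapW_integrable 0 a).add (gap_integrable_tilt a)).add
        ((gapW_integrable 1 a).const_mul a)
    · exact gapW_integrable 2 a
  linarith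

/-! ### Monotonicity -/

lemma gGap_eq (a : ℝ) : gGap a =
    Real.log (1 + a ^ 2) - (√(2 * Real.pi))⁻¹ * (2 * (Real.exp (-a ^ 2 / 2) * gapM 0 a)) := by
  rw [gGap, ← integral_sub_right_eq_self
      (fun x : ℝ => Real.log ((x + a) ^ 2) * Real.exp (-x ^ 2 / 2)) a,
    gapM]
  congr 2
  rw [← integral_const_mul, ← integral_const_mul]
  refine integral_congr_ae (ae_of_all _ fun y => ?_)
  beta_reduce
  rw [sub_add_cancel, Real.log_pow, gapW, gap_tilt]
  have : Real.exp (-a ^ 2 / 2) * Real.exp (a ^ 2 / 2) = 1 := by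
    rw [← Real.exp_add]; ring_nf; simp
  push_cast
  linear_combination (-2 * Real.log y * Real.exp (-(y - a) ^ 2 / 2)) * this

/-- `u(a) = -e^{a²/2} g'(a)`. -/
noncomputable def gapU (a : ℝ) : ℝ :=
  2 * (√(2 * Real.pi))⁻¹ * (gapM 1 a - a * gapM 0 a) -
    2 * a / (1 + a ^ 2) * Real.exp (a ^ 2 / 2)

lemma gapU_hasDerivAt (a : ℝ) :
    HasDerivAt gapU (4 * a ^ 2 / (1 + a ^ 2) ^ 2 * Real.exp (a ^ 2 / 2)) a := by
  have hne : (1 + a ^ 2 : ℝ) ≠ 0 := by positivity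
  have hs : √(2 * Real.pi) ≠ 0 := by positivity
  have hE : HasDerivAt (fun a : ℝ => Real.exp (a ^ 2 / 2)) (Real.exp (a ^ 2 / 2) * a) a := by
    have := ((hasDerivAt_pow 2 a).div_const 2).exp
    exact this.congr_deriv (by simp)
  have hq : HasDerivAt (fun a : ℝ => 2 * a / (1 + a ^ 2))
      ((2 * (1 + a ^ 2) - 2 * a * (2 * a)) / (1 + a ^ 2) ^ 2) a := by
    have := ((hasDerivAt_id a).const_mul 2).div ((hasDerivAt_pow 2 a).const_add 1) hne
    exact this.congr_deriv (by simp)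
  have hM := ((gapM_hasDerivAt 1 a).sub ((hasDerivAt_id a).mul (gapM_hasDerivAt 0 a))).const_mul
    (2 * (√(2 * Real.pi))⁻¹)
  have h := hM.sub (hq.mul hE)
  refine h.congr_deriv ?_
  have hr := gapM_recurrence a
  have hr' : gapM (1 + 1) a - (1 * gapM 0 a + id a * gapM (0 + 1) a) =
      √(2 * Real.pi) * Real.exp (a ^ 2 / 2) := by
    simp only [id, zero_add, Nat.reduceAdd]; linarith
  rw [hr']
  field_simp
  ring

lemma gapU_pos {a : ℝ} (ha : 0 < a) : 0 < gapU a := by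
  have hmono : StrictMonoOn gapU (Ici 0) := by
    refine strictMonoOn_of_deriv_pos (convex_Ici 0)
      (fun x _ => (gapU_hasDerivAt x).continuousAt.continuousWithinAt) fun x hx => ?_
    rw [interior_Ici] at hx
    have : 0 < x := hx
    rw [(gapU_hasDerivAt x).deriv]
    positivity
  have h0 : gapU 0 = 0 := by simp [gapU, gapM_one_zero]
  have := hmono self_mem_Ici ha.le ha
  rwa [h0] at this

lemma gGap_hasDerivAt (a : ℝ) : HasDerivAt gGap (-(Real.exp (-a ^ 2 / 2) * gapU a)) a := by
  have hne : (1 + a ^ 2 : ℝ) ≠ 0 := by positivity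
  have hE : HasDerivAt (fun a : ℝ => Real.exp (-a ^ 2 / 2)) (Real.exp (-a ^ 2 / 2) * -a) a := by
    have := ((hasDerivAt_pow 2 a).neg.div_const 2).exp
    exact this.congr_deriv (by simp [neg_div])
  have hl := ((hasDerivAt_pow 2 a).const_add 1).log hne
  have h := hl.sub (((hE.mul (gapM_hasDerivAt 0 a)).const_mul 2).const_mul (√(2 * Real.pi))⁻¹)
  have hfun : gGap = _ := funext gGap_eq
  rw [hfun]
  refine h.congr_deriv ?_
  have hx : Real.exp (-a ^ 2 / 2) * Real.exp (a ^ 2 / 2) = 1 := by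
    rw [← Real.exp_add]; ring_nf; simp
  simp only [gapU, zero_add]
  push_cast
  linear_combination (-2 * a / (1 + a ^ 2)) * hx

lemma gGap_strictAntiOn : StrictAntiOn gGap (Ici 0) := by
  refine strictAntiOn_of_deriv_neg (convex_Ici 0)
    (fun x _ => (gGap_hasDerivAt x).continuousAt.continuousWithinAt) fun x hx => ?_
  rw [interior_Ici] at hx
  rw [(gGap_hasDerivAt x).deriv, neg_lt_zero]
  exact mul_pos (Real.exp_pos _) (gapU_pos hx)

/-! ### The limit at infinity -/

/-- For `a ≥ 1` the shift `log⁺|x + a|` differs from `log a` by at most `log (1 + |x|) ≤ |x|`. -/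
lemma gap_posLog_shift {a : ℝ} (ha : 1 ≤ a) (x : ℝ) :
    |Real.posLog (x + a) - Real.log a| ≤ |x| := by
  have ha0 : 0 < a := by linarith
  have hx := abs_nonneg x
  have hlog : Real.log (1 + |x|) ≤ |x| := by
    have := Real.log_le_sub_one_of_pos (x := 1 + |x|) (by linarith)
    linarith
  rw [← Real.posLog_abs, Real.posLog_eq_log_max_one (abs_nonneg _)]
  set m := max 1 |x + a| with hm
  have hm1 : 1 ≤ m := le_max_left _ _
  have hm2 : |x + a| ≤ m := le_max_right _ _
  have h1 : m ≤ (1 + |x|) * a := by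
    refine max_le (by nlinarith) ?_
    calc |x + a| ≤ |x| + |a| := abs_add_le _ _
      _ = |x| + a := by rw [abs_of_pos ha0]
      _ ≤ _ := by nlinarith
  have h2 : a ≤ (1 + |x|) * m := by
    have : a ≤ |x + a| + |x| := by linarith [le_abs_self (x + a), neg_abs_le x, le_abs_self x]
    nlinarith
  have e1 := Real.log_le_log (by linarith) h1
  have e2 := Real.log_le_log ha0 h2
  rw [Real.log_mul (by positivity) (by positivity)] at e1 e2
  rw [abs_le]; constructor <;> linarith

lemma gap_tendsto_log_ratio (x : ℝ) :
    Tendsto (fun a : ℝ => Real.log (1 + x / a)) atTop (𝓝 0) := by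
  have h : Tendsto (fun a : ℝ => 1 + x / a) atTop (𝓝 (1 + 0)) :=
    tendsto_const_nhds.add (tendsto_const_nhds.div_atTop tendsto_id)
  have := h.log (by norm_num)
  simpa using this

lemma gap_tendsto_far : Tendsto
    (fun a : ℝ => ∫ x : ℝ, (Real.posLog (x + a) - Real.log a) * Real.exp (-x ^ 2 / 2))
    atTop (𝓝 0) := by
  have := tendsto_integral_filter_of_dominated_convergence (l := atTop) (μ := volume)
    (F := fun a x : ℝ => (Real.posLog (x + a) - Real.log a) * Real.exp (-x ^ 2 / 2))
    (f := fun _ => 0) _ (Eventually.of_forall fun a => by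
      refine Continuous.aestronglyMeasurable ?_
      fun_prop) ?_ gap_integrable_abs_mul_gauss_half (ae_of_all _ fun x => ?_)
  · simpa using this
  · filter_upwards [eventually_ge_atTop 1] with a ha
    refine ae_of_all _ fun x => ?_
    rw [norm_mul, Real.norm_eq_abs, Real.norm_eq_abs, Real.abs_exp]
    exact mul_le_mul_of_nonneg_right (gap_posLog_shift ha x) (Real.exp_pos _).le
  · have h := (gap_tendsto_log_ratio x).mul_const (Real.exp (-x ^ 2 / 2))
    rw [zero_mul] at h
    refine h.congr' ?_
    filter_upwards [eventually_ge_atTop 1, eventually_ge_atTop (1 - x)] with a h1 h2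
    have h3 : 1 ≤ x + a := by linarith
    rw [Real.posLog_eq_log (h3.trans (le_abs_self _)),
      ← Real.log_div (by linarith) (by linarith)]
    congr 2
    field_simp
    ring

lemma gap_tendsto_near : Tendsto
    (fun a : ℝ => ∫ x : ℝ, Real.posLog (x + a)⁻¹ * Real.exp (-x ^ 2 / 2)) atTop (𝓝 0) := by
  have hshift : ∀ a : ℝ, ∫ x : ℝ, Real.posLog (x + a)⁻¹ * Real.exp (-x ^ 2 / 2) =
      ∫ y : ℝ, Real.posLog y⁻¹ * Real.exp (-(y - a) ^ 2 / 2) := by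
    intro a
    rw [← integral_sub_right_eq_self _ a]
    simp
  simp_rw [hshift]
  have := tendsto_integral_filter_of_dominated_convergence (l := atTop) (μ := volume)
    (F := fun a y : ℝ => Real.posLog y⁻¹ * Real.exp (-(y - a) ^ 2 / 2))
    (f := fun _ => 0) _ (Eventually.of_forall fun a => by
      exact ((Real.continuous_posLog.measurable.comp measurable_inv).mul
        (by fun_prop)).aestronglyMeasurable)
    (Eventually.of_forall fun a => ae_of_all _ fun y => ?_)
    gap_integrable_posLog_inv (ae_of_all _ fun y => ?_)
  · simpa using this
  · have h2 : Real.exp (-(y - a) ^ 2 / 2) ≤ 1 := by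
      rw [Real.exp_le_one_iff]; nlinarith [sq_nonneg (y - a)]
    rw [norm_mul, Real.norm_of_nonneg Real.posLog_nonneg, Real.norm_eq_abs, Real.abs_exp]
    exact mul_le_of_le_one_right Real.posLog_nonneg h2
  · have h : Tendsto (fun a : ℝ => Real.exp (-(y - a) ^ 2 / 2)) atTop (𝓝 0) := by
      refine Real.tendsto_exp_atBot.comp ?_
      refine tendsto_atBot_mono' _ ?_ (tendsto_neg_atTop_atBot.comp
        (tendsto_atTop_add_const_right _ (-y) tendsto_id))
      filter_upwards [eventually_ge_atTop (y + 2)] with a ha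
      simp only [Function.comp, id]
      nlinarith
    simpa using h.const_mul (Real.posLog y⁻¹)

lemma gGap_eq_split {a : ℝ} (ha : 1 ≤ a) : gGap a =
    Real.log (1 + 1 / a ^ 2) - (√(2 * Real.pi))⁻¹ * (2 *
      ((∫ x : ℝ, (Real.posLog (x + a) - Real.log a) * Real.exp (-x ^ 2 / 2)) -
        ∫ x : ℝ, Real.posLog (x + a)⁻¹ * Real.exp (-x ^ 2 / 2))) := by
  have ha0 : 0 < a := by linarith
  have hs : √(2 * Real.pi) ≠ 0 := by positivity
  have i1 : Integrable
      (fun x : ℝ => (Real.posLog (x + a) - Real.log a) * Real.exp (-x ^ 2 / 2)) := by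
    refine Integrable.mono' gap_integrable_abs_mul_gauss_half ?_ (ae_of_all _ fun x => ?_)
    · refine Continuous.aestronglyMeasurable ?_
      fun_prop
    · rw [norm_mul, Real.norm_eq_abs, Real.norm_eq_abs, Real.abs_exp]
      exact mul_le_mul_of_nonneg_right (gap_posLog_shift ha x) (Real.exp_pos _).le
  have i2 : Integrable (fun x : ℝ => Real.posLog (x + a)⁻¹ * Real.exp (-x ^ 2 / 2)) := by
    refine Integrable.mono' (gap_integrable_posLog_inv.comp_add_right a) ?_
      (ae_of_all _ fun x => ?_)
    · exact ((Real.continuous_posLog.measurable.comp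
        (measurable_inv.comp (measurable_id.add_const a))).mul (by fun_prop)).aestronglyMeasurable
    · have h2 : Real.exp (-x ^ 2 / 2) ≤ 1 := by
        rw [Real.exp_le_one_iff]; nlinarith [sq_nonneg x]
      rw [norm_mul, Real.norm_of_nonneg Real.posLog_nonneg, Real.norm_eq_abs, Real.abs_exp]
      exact mul_le_of_le_one_right Real.posLog_nonneg h2
  have hpt : ∀ x : ℝ, Real.log ((x + a) ^ 2) * Real.exp (-x ^ 2 / 2) =
      2 * ((Real.posLog (x + a) - Real.log a) * Real.exp (-x ^ 2 / 2) -
        Real.posLog (x + a)⁻¹ * Real.exp (-x ^ 2 / 2)) +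
      2 * Real.log a * Real.exp (-x ^ 2 / 2) := by
    intro x
    rw [Real.log_pow, ← Real.posLog_sub_posLog_inv]
    push_cast
    ring
  have hlog : Real.log (1 + a ^ 2) = Real.log (1 + 1 / a ^ 2) + 2 * Real.log a := by
    rw [show (1 + a ^ 2 : ℝ) = (1 + 1 / a ^ 2) * a ^ 2 by field_simp; ring,
      Real.log_mul (by positivity) (by positivity), Real.log_pow]
    push_cast
    ring
  have i3 : Integrable (fun x : ℝ =>
      2 * ((Real.posLog (x + a) - Real.log a) * Real.exp (-x ^ 2 / 2) -
        Real.posLog (x + a)⁻¹ * Real.exp (-x ^ 2 / 2))) := (i1.sub i2).const_mul 2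
  rw [gGap]
  simp_rw [hpt]
  rw [integral_add i3 (gap_integrable_gauss.const_mul _),
    integral_const_mul, integral_const_mul, integral_sub i1 i2, gap_integral_gauss, hlog]
  field_simp
  ring

lemma gGap_tendsto : Tendsto gGap atTop (𝓝 0) := by
  have h1 : Tendsto (fun a : ℝ => Real.log (1 + 1 / a ^ 2)) atTop (𝓝 0) :=
    (gap_tendsto_log_ratio 1).comp (tendsto_pow_atTop two_ne_zero)
  have h := h1.sub (((gap_tendsto_far.sub gap_tendsto_near).const_mul 2).const_mul
    (√(2 * Real.pi))⁻¹)
  simp only [sub_zero, mul_zero] at h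
  refine h.congr' ?_
  filter_upwards [eventually_ge_atTop 1] with a ha
  exact (gGap_eq_split ha).symm

/-- `g` is decreasing on `[0,∞)`, `g(0) = C₁`, and `g(a) → 0`
as `a → ∞`. -/
theorem gGap_strictAnti_and_value_and_limit :
    StrictAntiOn gGap (Set.Ici 0) ∧ gGap 0 = C1 ∧
      Tendsto gGap atTop (nhds 0) := by
  refine ⟨gGap_strictAntiOn, ?_, gGap_tendsto⟩
  simp [gGap, C1]
end
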